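/- Let C be a real-rational n×n transfer matrix in RH∞. Then the following are equivalent: (i) the positive feedback interconnection [P,C] is stable for every strictly proper negative imaginary (NI) P ∈ R^{n×n}; (ii) [P,C] is stable for every strictly proper NI P ∈ R^{n×n} that has no double pole at the origin; (iii) C is strictly negative imaginary (SNI) and C(0) < 0 (negative definite). -/

import Mathlib

open Matrix Polynomial Filter Topology
open scoped ComplexOrder

noncomputable section

namespace NIControl

/-- Evaluate a real-rational function at a complex point (junk value at poles). -/
def evalC (f : RatFunc ℝ) (s : ℂ) : ℂ :=
  f.eval (algebraMap ℝ ℂ) s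

/-- `s` is a pole of the real-rational function `f`
(the reduced denominator vanishes at `s`). -/
def IsPoleAt (f : RatFunc ℝ) (s : ℂ) : Prop :=
  f.denom.eval₂ (algebraMap ℝ ℂ) s = 0

variable {n : ℕ}

/-- Pointwise evaluation of a real-rational transfer matrix at a complex point. -/
def evalM (G : Matrix (Fin n) (Fin n) (RatFunc ℝ)) (s : ℂ) : Matrix (Fin n) (Fin n) ℂ :=
  Matrix.of fun i j => evalC (G i j) s

/-- Pointwise evaluation of a real-rational transfer matrix at a real point. -/
def evalR (G : Matrix (Fin n) (Fin n) (RatFunc ℝ)) (x : ℝ) : Matrix (Fin n) (Fin n) ℝ :=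
  Matrix.of fun i j => (G i j).eval (RingHom.id ℝ) x

/-- Value at `s = ∞` of a proper real-rational function. -/
def atInfinity (f : RatFunc ℝ) : ℝ :=
  if f.num.degree = f.denom.degree then f.num.leadingCoeff / f.denom.leadingCoeff else 0

/-- The instantaneous gain `G(∞)` of a proper real-rational transfer matrix. -/
def evalInf (G : Matrix (Fin n) (Fin n) (RatFunc ℝ)) : Matrix (Fin n) (Fin n) ℝ :=
  Matrix.of fun i j => atInfinity (G i j)

/-- The matrix `G` has a pole at `s`. -/
def HasPole (G : Matrix (Fin n) (Fin n) (RatFunc ℝ)) (s : ℂ) : Prop :=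
  ∃ i j, IsPoleAt (G i j) s

/-- All entries of `G` are proper rational functions. -/
def Proper (G : Matrix (Fin n) (Fin n) (RatFunc ℝ)) : Prop :=
  ∀ i j, (G i j).num.degree ≤ (G i j).denom.degree

/-- All entries of `G` are strictly proper rational functions. -/
def StrictlyProper (G : Matrix (Fin n) (Fin n) (RatFunc ℝ)) : Prop :=
  ∀ i j, (G i j).num.degree < (G i j).denom.degree

/-- The pole of `G` at the origin (if any) is at most simple. -/
def NoDoubleOriginPole (G : Matrix (Fin n) (Fin n) (RatFunc ℝ)) : Prop :=
  ∀ i j, (G i j).denom.rootMultiplicity 0 ≤ 1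

/-- Membership in `RH∞`: proper and no poles in the closed right-half complex plane. -/
def MemRHinf {m : Type*} [Fintype m] (G : Matrix m m (RatFunc ℝ)) : Prop :=
  (∀ i j, (G i j).num.degree ≤ (G i j).denom.degree) ∧
  ∀ s : ℂ, 0 ≤ s.re → ∀ i j, ¬ IsPoleAt (G i j) s

/-- The point `jω` on the imaginary axis. -/
def jw (ω : ℝ) : ℂ := Complex.I * (ω : ℂ)

/-- The negative-imaginary frequency kernel `j (M − M*)`. -/
def niKer (M : Matrix (Fin n) (Fin n) ℂ) : Matrix (Fin n) (Fin n) ℂ :=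
  Complex.I • (M - Mᴴ)

/-- Negative imaginary (NI) real-rational transfer matrix. -/
def IsNI (G : Matrix (Fin n) (Fin n) (RatFunc ℝ)) : Prop :=
  Proper G ∧
  (∀ s : ℂ, 0 < s.re → ¬ HasPole G s) ∧
  (∀ ω : ℝ, 0 < ω → ¬ HasPole G (jw ω) → (niKer (evalM G (jw ω))).PosSemidef) ∧
  (∀ ω : ℝ, 0 < ω → HasPole G (jw ω) →
    ∃ R : Matrix (Fin n) (Fin n) ℂ, R.PosSemidef ∧
      Tendsto (fun s : ℂ => (s - jw ω) • Complex.I • evalM G s) (𝓝[≠] jw ω) (𝓝 R)) ∧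
  (HasPole G 0 →
    (∀ k : ℕ, 3 ≤ k → Tendsto (fun s : ℂ => s ^ k • evalM G s) (𝓝[≠] 0) (𝓝 0)) ∧
    ∃ R : Matrix (Fin n) (Fin n) ℂ, R.PosSemidef ∧
      Tendsto (fun s : ℂ => s ^ 2 • evalM G s) (𝓝[≠] 0) (𝓝 R))

/-- Strictly negative imaginary (SNI) real-rational transfer matrix. -/
def IsSNI (G : Matrix (Fin n) (Fin n) (RatFunc ℝ)) : Prop :=
  MemRHinf G ∧ ∀ ω : ℝ, 0 < ω → (niKer (evalM G (jw ω))).PosDef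

/-- Positive real (passive) real-rational transfer matrix. -/
def IsPositiveReal (G : Matrix (Fin n) (Fin n) (RatFunc ℝ)) : Prop :=
  MemRHinf G ∧ ∀ ω : ℝ, 0 ≤ ω → (evalM G (jw ω) + (evalM G (jw ω))ᴴ).PosSemidef

/-- Output strictly passive real-rational transfer matrix. -/
def IsOSP (G : Matrix (Fin n) (Fin n) (RatFunc ℝ)) : Prop :=
  MemRHinf G ∧ ∃ ε : ℝ, 0 < ε ∧ ∀ ω : ℝ, 0 ≤ ω →
    (evalM G (jw ω) + (evalM G (jw ω))ᴴ -
      (ε : ℂ) • ((evalM G (jw ω))ᴴ * evalM G (jw ω))).PosSemidef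

/-- Stability of the positive feedback interconnection `[P, C]`:
`[I; C] (I − P C)⁻¹ [I, P] ∈ RH∞`. -/
def FeedbackStable (P C : Matrix (Fin n) (Fin n) (RatFunc ℝ)) : Prop :=
  ((1 : Matrix (Fin n) (Fin n) (RatFunc ℝ)) - P * C).det ≠ 0 ∧
  MemRHinf (Matrix.fromBlocks
    (1 - P * C)⁻¹ ((1 - P * C)⁻¹ * P)
    (C * (1 - P * C)⁻¹) (C * (1 - P * C)⁻¹ * P))

/-- All eigenvalues of the complex matrix `M` are real and less than `c`. -/
def eigsRealAndLT (M : Matrix (Fin n) (Fin n) ℂ) (c : ℝ) : Prop :=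
  ∀ μ ∈ spectrum ℂ M, μ.im = 0 ∧ μ.re < c

/-- The (real) eigenvalues of the real matrix `M` are all real and its largest
eigenvalue is less than `c`. -/
def maxEigLT (M : Matrix (Fin n) (Fin n) ℝ) (c : ℝ) : Prop :=
  eigsRealAndLT (M.map (Complex.ofReal)) c

/-- Loewner order `A ≤ B` on real matrices. -/
def LoewnerLE (A B : Matrix (Fin n) (Fin n) ℝ) : Prop := (B - A).PosSemidef

/-- Strict Loewner order `A < B` on real matrices. -/
def LoewnerLT (A B : Matrix (Fin n) (Fin n) ℝ) : Prop := (B - A).PosDef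

/-!
If `P` is strictly proper and negative imaginary then `s P(s)` is positive real, and if `C` is
strictly negative imaginary then `(C(0) - C(s)) / s` is positive real. For `y = P (w + C y)`,
pairing the loop equation with `w + C y` therefore gives
`re s · (y* (-C(0)) y) ≤ re (s w* y)` on the open right half-plane: `C(0) < 0` bounds
`(1 - P C)⁻¹ P` there and on the approach to `0` and `∞`, while strictness of the frequency
inequality bounds it near the remaining points of the imaginary axis.

Conversely, `Φ(s) = M s² + D s + K` with `M > 0`, `K ≥ 0`, `D + Dᵀ ≥ 0` and `D + Dᵀ + K > 0` has a
strictly proper negative imaginary inverse without a double pole at `0`, and `[Φ⁻¹, C]` is unstable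
as soon as `Φ(s) y = C(s) y` for some `y ≠ 0` and `re s ≥ 0`. If `im (y* C(jω) y) ≥ 0`, such a `Φ`
is obtained at `s = jω` by fitting a Hermitian matrix to `C(jω) y` after removing a damping term;
if `C(0)` has an eigenvalue `l ≥ 0`, take `M = D = 1` and `K = l`.
-/

section PositiveRealFractions

lemma jw_re (ω : ℝ) : (jw ω).re = 0 := by simp [jw]

lemma jw_injective : Function.Injective jw := fun x y h => by simpa [jw] using h

lemma continuous_jw : Continuous jw := by unfold jw; fun_prop

lemma eq_jw_of_re_eq_zero {s : ℂ} (hs : s.re = 0) : s = jw s.im := by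
  apply Complex.ext <;> simp [jw, hs]

lemma nonneg_of_eventually_cofinite {g : ℝ → ℝ} (hg : Continuous g)
    (h : ∀ᶠ x in cofinite, 0 ≤ g x) (x : ℝ) : 0 ≤ g x := by
  have hdense : Dense {x | 0 ≤ g x} := by
    simpa using (show ({x | 0 ≤ g x}ᶜ).Finite from h).countable.dense_compl ℝ
  have hclosed : IsClosed {x | 0 ≤ g x} := isClosed_le continuous_const hg
  exact hclosed.closure_subset (hdense x)

lemma eventually_eval_ne_zero {q : ℂ[X]} (hq : q ≠ 0) (a : ℂ) : ∀ᶠ s in 𝓝[≠] a, q.eval s ≠ 0 :=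
  nhdsNE_le_cofinite a (eventually_cofinite_not_isRoot hq)

lemma eventually_cofinite_eval_jw_ne_zero {q : ℂ[X]} (hq : q ≠ 0) :
    ∀ᶠ ω : ℝ in cofinite, q.eval (jw ω) ≠ 0 :=
  jw_injective.tendsto_cofinite.eventually (eventually_cofinite_not_isRoot hq)

lemma eventually_cobounded_norm_exp_neg_div_le {p q : ℂ[X]} (hdeg : p.degree ≤ q.degree) :
    ∃ K : ℝ, ∀ᶠ z in Bornology.cobounded ℂ, ‖Complex.exp (-(p.eval z / q.eval z))‖ ≤ K := by
  obtain ⟨K, hK⟩ := (isBigO_cobounded_of_degree_le hdeg).bound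
  refine ⟨Real.exp (max K 0), hK.mono fun z hz => ?_⟩
  rw [Complex.norm_exp, Real.exp_le_exp, Complex.neg_re]
  have hdiv : ‖p.eval z / q.eval z‖ ≤ max K 0 := by
    rw [norm_div]
    exact div_le_of_le_mul₀ (norm_nonneg _) (le_max_right _ _)
      (hz.trans (mul_le_mul_of_nonneg_right (le_max_left _ _) (norm_nonneg _)))
  exact (neg_le_abs _).trans ((Complex.abs_re_le_norm _).trans hdiv)

lemma diffContOnCl_exp_neg_div {p q : ℂ[X]} (hq : ∀ s : ℂ, 0 ≤ s.re → q.eval s ≠ 0) :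
    DiffContOnCl ℂ (fun z => Complex.exp (-(p.eval z / q.eval z))) {z | 0 < z.re} := by
  refine DifferentiableOn.diffContOnCl fun z hz => ?_
  rw [Complex.closure_setOfPred_lt_re] at hz
  have hdiv := p.differentiableAt.div q.differentiableAt (hq z hz)
  exact hdiv.neg.cexp.differentiableWithinAt

-- Phragmén–Lindelöf for `exp (-p / q)`, whose norm is at most one exactly where `0 ≤ re (p / q)`.
lemma re_div_nonneg_of_forall_ne_zero {p q : ℂ[X]} (hdeg : p.degree ≤ q.degree)
    (hq : ∀ s : ℂ, 0 ≤ s.re → q.eval s ≠ 0)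
    (hre : ∀ᶠ ω : ℝ in cofinite, 0 ≤ (p.eval (jw ω) / q.eval (jw ω)).re)
    {s : ℂ} (hs : 0 ≤ s.re) : 0 ≤ (p.eval s / q.eval s).re := by
  have hcont : Continuous fun ω : ℝ => (p.eval (jw ω) / q.eval (jw ω)).re :=
    Complex.continuous_re.comp <| (p.continuous.comp continuous_jw).div₀
      (q.continuous.comp continuous_jw) fun ω => hq _ (jw_re ω).ge
  have haxis := nonneg_of_eventually_cofinite hcont hre
  obtain ⟨K, hK⟩ := eventually_cobounded_norm_exp_neg_div_le hdeg
  have hbound : ‖Complex.exp (-(p.eval s / q.eval s))‖ ≤ 1 := by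
    refine PhragmenLindelof.right_half_plane_of_bounded_on_real
      (f := fun z => Complex.exp (-(p.eval z / q.eval z)))
      (diffContOnCl_exp_neg_div hq) ⟨0, by norm_num, 0, ?_⟩ ⟨K, ?_⟩ (fun ω => ?_) hs
    · refine Asymptotics.IsBigO.of_bound K (eventually_inf_principal.mpr ?_)
      filter_upwards [hK] with z hz _
      simpa using hz
    · exact eventually_map.mpr (RCLike.tendsto_ofReal_atTop_cobounded ℂ |>.eventually hK)
    · rw [mul_comm, ← jw, Complex.norm_exp, Real.exp_le_one_iff, Complex.neg_re]
      exact neg_nonpos.mpr (haxis ω)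
  rw [Complex.norm_exp, Real.exp_le_one_iff, Complex.neg_re] at hbound
  exact neg_nonpos.mp hbound

/-- The boundary conditions of the positive-real lemma for the fraction `p / q`, which need not be
reduced: no poles in the open right half-plane, boundedness at infinity, nonnegative real part on
the imaginary axis, and only simple poles with nonnegative residues there. -/
structure IsPosRealFraction (p q : ℂ[X]) : Prop where
  degree_le : p.degree ≤ q.degree
  eval_ne_zero : ∀ s : ℂ, 0 < s.re → q.eval s ≠ 0
  re_nonneg : ∀ᶠ ω : ℝ in cofinite, 0 ≤ (p.eval (jw ω) / q.eval (jw ω)).re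
  residue_nonneg : ∀ ω : ℝ, q.eval (jw ω) = 0 → ∃ r : ℂ, 0 ≤ r ∧
    Tendsto (fun s => (s - jw ω) * (p.eval s / q.eval s)) (𝓝[≠] jw ω) (𝓝 r)

lemma exists_eq_mul_add_of_tendsto_residue {p q : ℂ[X]} {a r : ℂ} (hq : q ≠ 0)
    (h : Tendsto (fun s => (s - a) * (p.eval s / ((X - C a) * q).eval s)) (𝓝[≠] a) (𝓝 r)) :
    ∃ p₁ : ℂ[X], p = (X - C a) * p₁ + C r * q := by
  have hlim : Tendsto (fun s => (p - C r * q).eval s) (𝓝[≠] a) (𝓝 ((r - r) * q.eval a)) := by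
    refine ((h.sub_const r).mul (q.continuousAt.mono_left nhdsWithin_le_nhds)).congr' ?_
    filter_upwards [eventually_eval_ne_zero hq a, self_mem_nhdsWithin] with s hqs hsa
    have : s - a ≠ 0 := sub_ne_zero.mpr hsa
    simp only [eval_mul, eval_sub, eval_X, eval_C]
    field_simp
  have hroot : (p - C r * q).IsRoot a := by
    simpa using tendsto_nhds_unique
      ((p - C r * q).continuousAt.mono_left nhdsWithin_le_nhds) hlim
  obtain ⟨p₁, hp₁⟩ := dvd_iff_isRoot.mpr hroot
  exact ⟨p₁, by rw [← hp₁]; ring⟩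

lemma eval_div_eq_add {p q : ℂ[X]} {a r z : ℂ} (hz : ((X - C a) * q).eval z ≠ 0) :
    ((X - C a) * p + C r * q).eval z / ((X - C a) * q).eval z =
      p.eval z / q.eval z + r / (z - a) := by
  simp only [eval_mul, eval_sub, eval_X, eval_C, eval_add] at hz ⊢
  have := left_ne_zero_of_mul hz
  have := right_ne_zero_of_mul hz
  field_simp

lemma degree_le_of_degree_mul_add_le {p q : ℂ[X]} {a r : ℂ}
    (h : ((X - C a) * p + C r * q).degree ≤ ((X - C a) * q).degree) : p.degree ≤ q.degree := by
  have hmul : ((X - C a) * p).degree ≤ ((X - C a) * q).degree := by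
    rw [← add_sub_cancel_right ((X - C a) * p) (C r * q)]
    refine (degree_sub_le _ _).trans (max_le h ?_)
    rw [degree_mul, degree_mul, degree_X_sub_C]
    gcongr
    exact degree_C_le.trans zero_le_one
  rw [degree_mul, degree_mul, degree_X_sub_C] at hmul
  exact (WithBot.add_le_add_iff_left WithBot.one_ne_bot).mp hmul

lemma tendsto_residue_simple_pole (r a b : ℂ) :
    Tendsto (fun s => (s - b) * (r / (s - a))) (𝓝[≠] b) (𝓝 (if b = a then r else 0)) := by
  split_ifs with hba
  · subst hba
    refine tendsto_const_nhds.congr' ?_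
    filter_upwards [self_mem_nhdsWithin] with s hs
    exact (mul_div_cancel₀ r (sub_ne_zero.mpr hs)).symm
  · have hcont : ContinuousAt (fun s => (s - b) * (r / (s - a))) b := by
      fun_prop (disch := exact sub_ne_zero.mpr hba)
    simpa using hcont.tendsto.mono_left (nhdsWithin_le_nhds (s := {b}ᶜ))

namespace IsPosRealFraction

lemma denom_ne_zero {p q : ℂ[X]} (h : IsPosRealFraction p q) : q ≠ 0 := by
  rintro rfl
  exact h.eval_ne_zero 1 (by simp) eval_zero

lemma of_mul_add {p q : ℂ[X]} {ω : ℝ} {r : ℂ}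
    (h : IsPosRealFraction ((X - C (jw ω)) * p + C r * q) ((X - C (jw ω)) * q))
    (hr : 0 ≤ r)
    (hlim : Tendsto (fun s => (s - jw ω) * (((X - C (jw ω)) * p + C r * q).eval s /
      ((X - C (jw ω)) * q).eval s)) (𝓝[≠] jw ω) (𝓝 r)) :
    IsPosRealFraction p q where
  degree_le := degree_le_of_degree_mul_add_le h.degree_le
  eval_ne_zero s hs hq := h.eval_ne_zero s hs (by simp [hq])
  re_nonneg := by
    filter_upwards [h.re_nonneg, eventually_cofinite_eval_jw_ne_zero h.denom_ne_zero]
      with ω' hre hne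
    have haxis : (r / (jw ω' - jw ω)).re = 0 := by
      rw [Complex.div_re, ← (Complex.le_def.mp hr).2]
      simp [jw_re]
    rwa [eval_div_eq_add hne, Complex.add_re, haxis, add_zero] at hre
  residue_nonneg ω' hω' := by
    obtain ⟨r', hr', hlim'⟩ := h.residue_nonneg ω' (by simp [hω'])
    have hsub := hlim'.sub (tendsto_residue_simple_pole r (jw ω) (jw ω'))
    refine ⟨_, ?_, hsub.congr' ?_⟩
    · split_ifs with heq
      · rw [heq] at hlim'
        rw [tendsto_nhds_unique hlim' hlim, sub_self]
      · rwa [sub_zero]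
    · filter_upwards [eventually_eval_ne_zero h.denom_ne_zero _] with z hz
      rw [eval_div_eq_add hz]
      ring

-- Induction on the degree, splitting off one pole `r / (s - jω)` at a time.
lemma re_div_nonneg {p q : ℂ[X]} (h : IsPosRealFraction p q) {s : ℂ} (hs : 0 < s.re) :
    0 ≤ (p.eval s / q.eval s).re := by
  induction hd : q.natDegree generalizing p q with
  | zero =>
    refine re_div_nonneg_of_forall_ne_zero h.degree_le (fun z _ hz => h.denom_ne_zero ?_)
      h.re_nonneg hs.le
    rw [eq_C_of_natDegree_eq_zero hd] at hz ⊢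
    simpa using hz
  | succ d ih =>
    by_cases haxis : ∃ ω : ℝ, q.eval (jw ω) = 0
    · obtain ⟨ω, hω⟩ := haxis
      obtain ⟨r, hr, hlim⟩ := h.residue_nonneg ω hω
      obtain ⟨q, rfl⟩ := dvd_iff_isRoot.mpr hω
      have hq : q ≠ 0 := right_ne_zero_of_mul h.denom_ne_zero
      obtain ⟨p, rfl⟩ := exists_eq_mul_add_of_tendsto_residue hq hlim
      have hdeg : q.natDegree = d := by
        rw [natDegree_mul (X_sub_C_ne_zero _) hq, natDegree_X_sub_C] at hd
        omega
      have hpole : 0 ≤ (r / (s - jw ω)).re := by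
        rw [Complex.div_re, ← (Complex.le_def.mp hr).2, Complex.sub_re, jw_re]
        have := (Complex.le_def.mp hr).1
        simp only [sub_zero, Complex.zero_im, zero_mul, zero_div, add_zero]
        exact div_nonneg (mul_nonneg this hs.le) (Complex.normSq_nonneg _)
      rw [eval_div_eq_add (h.eval_ne_zero s hs), Complex.add_re]
      exact add_nonneg (ih (h.of_mul_add hr hlim) hdeg) hpole
    · refine re_div_nonneg_of_forall_ne_zero h.degree_le (fun z hz h0 => ?_) h.re_nonneg hs.le
      rcases hz.lt_or_eq with hpos | hzero
      · exact h.eval_ne_zero z hpos h0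
      · exact haxis ⟨z.im, by rwa [← eq_jw_of_re_eq_zero hzero.symm]⟩

end IsPosRealFraction

lemma tendsto_add_ofReal_mul (a : ℂ) {w : ℂ} (hw : w ≠ 0) :
    Tendsto (fun x : ℝ => a + x * w) (𝓝[>] 0) (𝓝[≠] a) := by
  refine tendsto_nhdsWithin_of_tendsto_nhds_of_eventually_within _ ?_ ?_
  · exact (Continuous.tendsto' (by fun_prop) _ _ (by simp)).mono_left nhdsWithin_le_nhds
  · filter_upwards [self_mem_nhdsWithin] with x hx
    simp [hw, (Set.mem_Ioi.mp hx).ne']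

lemma nonneg_of_forall_re_add_mul_im_nonneg {r : ℂ} (h : ∀ t : ℝ, 0 ≤ r.re + t * r.im) : 0 ≤ r := by
  have him : r.im = 0 := by
    by_contra hne
    have := h (-(r.re + 1) / r.im)
    rw [div_mul_cancel₀ _ hne] at this
    linarith
  exact Complex.le_def.mpr ⟨by simpa using h 0, him.symm⟩

-- Approaching `a` along the ray of direction `1 + t i` gives `0 ≤ re (conj (1 + t i) * r)`.
lemma residue_nonneg_of_re_nonneg {g : ℂ → ℂ} (hg : ∀ s : ℂ, 0 < s.re → 0 ≤ (g s).re) {a r : ℂ}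
    (ha : a.re = 0) (hlim : Tendsto (fun s => (s - a) * g s) (𝓝[≠] a) (𝓝 r)) : 0 ≤ r := by
  refine nonneg_of_forall_re_add_mul_im_nonneg fun t => ?_
  set w : ℂ := 1 + t * Complex.I with hw
  have hw_re : w.re = 1 := by simp [hw]
  have hw0 : w ≠ 0 := fun h => by simp [h] at hw_re
  have hray := ((Complex.continuous_re.comp (continuous_const_mul (star w))).tendsto r).comp
    (hlim.comp (tendsto_add_ofReal_mul a hw0))
  have hval : (star w * r).re = r.re + t * r.im := by simp [hw]
  rw [← hval]
  refine ge_of_tendsto hray ?_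
  filter_upwards [self_mem_nhdsWithin] with x (hx : 0 < x)
  have hpos : 0 < (a + x * w).re := by simp [ha, hw_re, hx]
  have hnormSq : star w * ((a + x * w - a) * g (a + x * w)) =
      ((x * Complex.normSq w : ℝ) : ℂ) * g (a + x * w) := by
    rw [Complex.ofReal_mul, ← Complex.mul_conj, Complex.star_def]
    ring
  simp only [Function.comp_apply, hnormSq, Complex.re_ofReal_mul]
  exact mul_nonneg (mul_nonneg hx.le (Complex.normSq_nonneg _)) (hg _ hpos)

end PositiveRealFractions

section RealRational

variable {f : RatFunc ℝ} {s a : ℂ}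

lemma evalC_eq_div (f : RatFunc ℝ) (s : ℂ) : evalC f s = aeval s f.num / aeval s f.denom := rfl

lemma not_isPoleAt_of_denom_dvd {q : ℝ[X]} (h : f.denom ∣ q) (hq : aeval s q ≠ 0) :
    ¬ IsPoleAt f s := by
  obtain ⟨r, rfl⟩ := h
  exact left_ne_zero_of_mul (by rwa [map_mul] at hq)

/-- The ring of real-rational functions without a pole at `s`. -/
def regularAt (s : ℂ) : Subring (RatFunc ℝ) where
  carrier := {f | ¬ IsPoleAt f s}
  mul_mem' {f g} hf hg := not_isPoleAt_of_denom_dvd (RatFunc.denom_mul_dvd f g)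
    (by rw [map_mul]; exact mul_ne_zero hf hg)
  one_mem' := by simp [IsPoleAt]
  add_mem' {f g} hf hg := not_isPoleAt_of_denom_dvd (RatFunc.denom_add_dvd f g)
    (by rw [map_mul]; exact mul_ne_zero hf hg)
  zero_mem' := by simp [IsPoleAt]
  neg_mem' {f} hf := by
    have hmul : -f = algebraMap ℝ[X] (RatFunc ℝ) (-1) * f := by simp
    rw [hmul]
    exact not_isPoleAt_of_denom_dvd (RatFunc.denom_mul_dvd _ f)
      (by rw [RatFunc.denom_algebraMap, one_mul]; exact hf)

lemma mem_regularAt : f ∈ regularAt s ↔ aeval s f.denom ≠ 0 := Iff.rfl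

/-- Evaluation at `s` as a homomorphism on the functions regular at `s`. -/
def evalHom (s : ℂ) : regularAt s →+* ℂ where
  toFun f := evalC f s
  map_one' := RatFunc.eval_one _ _
  map_mul' f g := RatFunc.eval_mul _ _ f.2 g.2
  map_zero' := RatFunc.eval_zero _ _
  map_add' f g := RatFunc.eval_add _ _ f.2 g.2

lemma isUnit_of_evalHom_ne_zero {f : regularAt s} (h : evalHom s f ≠ 0) : IsUnit f := by
  have hf : f.1 ≠ 0 := fun h0 => h (by rw [show f = 0 from Subtype.ext h0, map_zero])
  have hnum : aeval s f.1.num ≠ 0 := fun h0 => h (by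
    rw [show evalHom s f = evalC f.1 s from rfl, evalC_eq_div, h0, zero_div])
  have hinv : f.1⁻¹ ∈ regularAt s := not_isPoleAt_of_denom_dvd (RatFunc.denom_inv_dvd hf) hnum
  exact IsUnit.of_mul_eq_one ⟨_, hinv⟩ (Subtype.ext (mul_inv_cancel₀ hf))

lemma algebraMap_mem_regularAt (p : ℝ[X]) (s : ℂ) :
    algebraMap ℝ[X] (RatFunc ℝ) p ∈ regularAt s := by
  simp [mem_regularAt]

lemma evalC_algebraMap (p : ℝ[X]) (s : ℂ) :
    evalC (algebraMap ℝ[X] (RatFunc ℝ) p) s = aeval s p := by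
  simp [evalC_eq_div]

lemma star_mem_regularAt : f ∈ regularAt (star s) ↔ f ∈ regularAt s := by
  simp only [mem_regularAt, RCLike.star_def, aeval_conj, ne_eq, map_eq_zero]

lemma evalC_star (f : RatFunc ℝ) (s : ℂ) : evalC f (star s) = star (evalC f s) := by
  simp only [evalC_eq_div, RCLike.star_def, aeval_conj, map_div₀]

lemma evalC_ofReal (f : RatFunc ℝ) (x : ℝ) :
    evalC f x = ((f.eval (RingHom.id ℝ) x : ℝ) : ℂ) := by
  rw [evalC_eq_div, RatFunc.eval, Complex.ofReal_div]
  congr 1 <;> exact eval₂_at_apply (algebraMap ℝ ℂ) x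

lemma continuousAt_evalC (h : f ∈ regularAt s) : ContinuousAt (evalC f) s :=
  f.num.continuousAt_aeval.div f.denom.continuousAt_aeval h

/-- The order of the pole of `f` at `a`, zero if `f` is regular there. -/
def poleOrder (f : RatFunc ℝ) (a : ℂ) : ℕ := (f.denom.map (algebraMap ℝ ℂ)).rootMultiplicity a

lemma denom_map_ne_zero (f : RatFunc ℝ) : f.denom.map (algebraMap ℝ ℂ) ≠ 0 :=
  map_ne_zero f.denom_ne_zero

lemma poleOrder_eq_zero_iff : poleOrder f a = 0 ↔ f ∈ regularAt a := by
  rw [poleOrder, ← not_iff_not, ← ne_eq, ← pos_iff_ne_zero,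
    rootMultiplicity_pos (denom_map_ne_zero f), mem_regularAt, not_not, IsRoot, eval_map_algebraMap]

lemma rootMultiplicity_zero_denom (f : RatFunc ℝ) :
    f.denom.rootMultiplicity 0 = poleOrder f 0 := by
  rw [poleOrder, eq_rootMultiplicity_map (algebraMap ℝ ℂ).injective, map_zero]

lemma aeval_num_ne_zero (h : f ∉ regularAt a) : aeval a f.num ≠ 0 := by
  intro hnum
  obtain ⟨u, v, huv⟩ := f.isCoprime_num_denom
  have := congrArg (aeval a) huv
  simp [hnum, not_not.mp (mem_regularAt.not.mp h)] at this

lemma exists_tendsto_pow_poleOrder (f : RatFunc ℝ) (a : ℂ) :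
    ∃ L : ℂ, (f ∉ regularAt a → L ≠ 0) ∧
    Tendsto (fun s => (s - a) ^ poleOrder f a * evalC f s) (𝓝[≠] a) (𝓝 L) := by
  obtain ⟨b, hb, hndvd⟩ :=
    exists_eq_pow_rootMultiplicity_mul_and_not_dvd _ (denom_map_ne_zero f) a
  have hba : b.eval a ≠ 0 := fun h => hndvd (dvd_iff_isRoot.mpr h)
  refine ⟨aeval a f.num / b.eval a, fun h => div_ne_zero (aeval_num_ne_zero h) hba, ?_⟩
  refine ((f.num.continuousAt_aeval.div b.continuousAt hba).tendsto.mono_left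
    nhdsWithin_le_nhds).congr' ?_
  filter_upwards [self_mem_nhdsWithin] with s hs
  have hpow : (s - a) ^ poleOrder f a ≠ 0 := pow_ne_zero _ (sub_ne_zero.mpr hs)
  have hden : aeval s f.denom = (s - a) ^ poleOrder f a * b.eval s := by
    rw [← eval_map_algebraMap, hb, eval_mul, eval_pow, eval_sub, eval_X, eval_C, poleOrder]
  rw [evalC_eq_div, hden, mul_div_assoc', mul_div_mul_left _ _ hpow, Pi.div_apply]

lemma exists_tendsto_pow_mul_evalC {N : ℕ} (h : poleOrder f a ≤ N) :
    ∃ L : ℂ, Tendsto (fun s => (s - a) ^ N * evalC f s) (𝓝[≠] a) (𝓝 L) := by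
  obtain ⟨L, -, hL⟩ := exists_tendsto_pow_poleOrder f a
  have hpow : Tendsto (fun s => (s - a) ^ (N - poleOrder f a)) (𝓝[≠] a)
      (𝓝 ((a - a) ^ (N - poleOrder f a))) :=
    (Continuous.tendsto (by fun_prop) a).mono_left nhdsWithin_le_nhds
  refine ⟨_, (hpow.mul hL).congr fun s => ?_⟩
  rw [← mul_assoc, ← pow_add, Nat.sub_add_cancel h]

lemma poleOrder_le_of_frequently_norm_le {N : ℕ} {K : ℝ}
    (h : ∃ᶠ s in 𝓝[≠] a, ‖(s - a) ^ N * evalC f s‖ ≤ K) : poleOrder f a ≤ N := by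
  by_contra! hlt
  obtain ⟨L, hL, hlim⟩ := exists_tendsto_pow_poleOrder f a
  have hpole : f ∉ regularAt a := fun hreg => by
    rw [poleOrder_eq_zero_iff.mpr hreg] at hlt
    exact absurd hlt (Nat.not_lt_zero N)
  have hzero : Tendsto (fun s => ‖(s - a) ^ (poleOrder f a - N)‖ * K) (𝓝[≠] a) (𝓝 0) := by
    refine (Continuous.tendsto' (by fun_prop) _ _ ?_).mono_left nhdsWithin_le_nhds
    simp [Nat.sub_ne_zero_of_lt hlt]
  have hsmall := hzero.eventually_lt hlim.norm (norm_pos_iff.mpr (hL hpole))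
  obtain ⟨s, hK, hs⟩ := (h.and_eventually hsmall).exists
  rw [← Nat.sub_add_cancel hlt.le, pow_add, mul_assoc, norm_mul, Nat.add_sub_cancel] at hs
  exact (mul_le_mul_of_nonneg_left hK (norm_nonneg _)).not_gt hs

lemma mem_regularAt_of_frequently_norm_le {K : ℝ}
    (h : ∃ᶠ s in 𝓝[≠] a, ‖evalC f s‖ ≤ K) : f ∈ regularAt a :=
  poleOrder_eq_zero_iff.mp <| Nat.le_zero.mp <|
    poleOrder_le_of_frequently_norm_le (N := 0) (by simpa using h)

lemma num_degree_le_of_frequently_norm_le {K : ℝ} (h : ∃ᶠ x : ℝ in atTop, ‖evalC f x‖ ≤ K) :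
    f.num.degree ≤ f.denom.degree := by
  by_contra! hlt
  have hlim := abs_div_tendsto_atTop_atTop_of_degree_gt _ _ hlt f.denom_ne_zero
  obtain ⟨x, hle, hgt⟩ := (h.and_eventually (hlim.eventually_gt_atTop K)).exists
  rw [evalC_ofReal, Complex.norm_real] at hle
  exact hle.not_gt hgt

lemma num_degree_lt_of_tendsto_zero (h : Tendsto (fun x : ℝ => evalC f x) atTop (𝓝 0)) :
    f.num.degree < f.denom.degree := by
  rw [← div_tendsto_atTop_zero_iff_degree_lt _ _ f.denom_ne_zero]
  refine (Complex.continuous_re.tendsto' 0 0 rfl |>.comp h).congr fun x => ?_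
  rw [Function.comp_apply, evalC_ofReal, Complex.ofReal_re]
  rfl

lemma num_degree_le_iff_intDegree_nonpos :
    f.num.degree ≤ f.denom.degree ↔ f.intDegree ≤ 0 := by
  rcases eq_or_ne f 0 with rfl | hf
  · simp
  · rw [degree_eq_natDegree (RatFunc.num_ne_zero hf), degree_eq_natDegree f.denom_ne_zero,
      Nat.cast_le, RatFunc.intDegree, sub_nonpos, Nat.cast_le]

/-- The ring of scalar `RH∞` functions. -/
def rhInf : Subring (RatFunc ℝ) where
  carrier := {f | f.num.degree ≤ f.denom.degree ∧ ∀ s : ℂ, 0 ≤ s.re → f ∈ regularAt s}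
  mul_mem' {f g} hf hg := by
    refine ⟨?_, fun s hs => mul_mem (hf.2 s hs) (hg.2 s hs)⟩
    have hf' := num_degree_le_iff_intDegree_nonpos.mp hf.1
    have hg' := num_degree_le_iff_intDegree_nonpos.mp hg.1
    rcases eq_or_ne f 0 with rfl | hf0
    · simp
    rcases eq_or_ne g 0 with rfl | hg0
    · simp
    rw [num_degree_le_iff_intDegree_nonpos, RatFunc.intDegree_mul hf0 hg0]
    exact add_nonpos hf' hg'
  one_mem' := ⟨by simp, fun s _ => one_mem _⟩
  add_mem' {f g} hf hg := by
    refine ⟨?_, fun s hs => add_mem (hf.2 s hs) (hg.2 s hs)⟩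
    rcases eq_or_ne g 0 with rfl | hg0
    · simpa using hf.1
    rcases eq_or_ne (f + g) 0 with hfg | hfg
    · simp [hfg]
    exact num_degree_le_iff_intDegree_nonpos.mpr <| (RatFunc.intDegree_add_le hg0 hfg).trans <|
      max_le (num_degree_le_iff_intDegree_nonpos.mp hf.1)
        (num_degree_le_iff_intDegree_nonpos.mp hg.1)
  zero_mem' := ⟨by simp, fun s _ => zero_mem _⟩
  neg_mem' {f} hf := by
    refine ⟨?_, fun s hs => neg_mem (hf.2 s hs)⟩
    rw [num_degree_le_iff_intDegree_nonpos, RatFunc.intDegree_neg,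
      ← num_degree_le_iff_intDegree_nonpos]
    exact hf.1

end RealRational

section QuadraticForms

open WithLp (toLp)

variable {ι : Type*} [Fintype ι]

/-- The quadratic form `y* M y`. -/
def quadForm (M : Matrix ι ι ℂ) (y : ι → ℂ) : ℂ := star y ⬝ᵥ M *ᵥ y

lemma quadForm_add (M N : Matrix ι ι ℂ) (y : ι → ℂ) :
    quadForm (M + N) y = quadForm M y + quadForm N y := by
  simp [quadForm, add_mulVec, dotProduct_add]

lemma quadForm_neg (M : Matrix ι ι ℂ) (y : ι → ℂ) : quadForm (-M) y = -quadForm M y := by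
  simp [quadForm, neg_mulVec, dotProduct_neg]

lemma quadForm_sub (M N : Matrix ι ι ℂ) (y : ι → ℂ) :
    quadForm (M - N) y = quadForm M y - quadForm N y := by
  rw [sub_eq_add_neg, quadForm_add, quadForm_neg, sub_eq_add_neg]

lemma quadForm_smul (a : ℂ) (M : Matrix ι ι ℂ) (y : ι → ℂ) :
    quadForm (a • M) y = a * quadForm M y := by
  simp [quadForm, smul_mulVec, dotProduct_smul]

lemma star_dotProduct_self (y : ι → ℂ) : star y ⬝ᵥ y = ((‖toLp 2 y‖ ^ 2 : ℝ) : ℂ) := by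
  rw [dotProduct_comm, ← WithLp.ofLp_toLp 2 y, ← EuclideanSpace.inner_eq_star_dotProduct,
    inner_self_eq_norm_sq_to_K, WithLp.ofLp_toLp, Complex.ofReal_pow]
  rfl

lemma star_star_dotProduct (u v : ι → ℂ) : star (star u ⬝ᵥ v) = star v ⬝ᵥ u := by
  rw [← star_dotProduct_star, star_star, dotProduct_comm]

lemma quadForm_conjTranspose (M : Matrix ι ι ℂ) (y : ι → ℂ) :
    quadForm Mᴴ y = star (quadForm M y) := by
  rw [quadForm, quadForm, star_star_dotProduct, star_mulVec, ← dotProduct_mulVec]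

lemma quadForm_map_star (M : Matrix ι ι ℂ) (y : ι → ℂ) :
    quadForm (M.map star) y = star (quadForm M (star y)) := by
  simp [quadForm, dotProduct, mulVec]

lemma quadForm_real_smul (M : Matrix ι ι ℂ) (y : ι → ℂ) (t : ℝ) :
    quadForm M ((t : ℂ) • y) = ((t ^ 2 : ℝ) : ℂ) * quadForm M y := by
  simp only [quadForm, mulVec_smul, dotProduct_smul, star_smul, smul_dotProduct, smul_eq_mul,
    RCLike.star_def, Complex.conj_ofReal, Complex.ofReal_pow]
  ring

lemma continuous_quadForm : Continuous fun z : Matrix ι ι ℂ × (ι → ℂ) => quadForm z.1 z.2 := by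
  unfold quadForm; fun_prop

lemma continuous_quadForm_left (y : ι → ℂ) : Continuous fun M : Matrix ι ι ℂ => quadForm M y :=
  continuous_quadForm.comp (by fun_prop : Continuous fun M : Matrix ι ι ℂ => (M, y))

lemma posDef_iff_quadForm_pos {M : Matrix ι ι ℂ} (hM : M.IsHermitian) :
    M.PosDef ↔ ∀ y, y ≠ 0 → 0 < (quadForm M y).re := by
  rw [posDef_iff_dotProduct_mulVec, and_iff_right hM]
  refine forall₂_congr fun y _ => ?_
  have him : (star y ⬝ᵥ M *ᵥ y).im = 0 := hM.im_star_dotProduct_mulVec_self y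
  rw [Complex.lt_def, him, Complex.zero_im, and_iff_left rfl]
  rfl

lemma isHermitian_of_quadForm_im_eq_zero {M : Matrix ι ι ℂ} (h : ∀ y, (quadForm M y).im = 0) :
    M.IsHermitian := by
  classical
  rw [← isSymmetric_toEuclideanLin_iff, LinearMap.isSymmetric_iff_inner_map_self_real]
  intro v
  have hinner : inner ℂ (toEuclideanLin M v) v = star (quadForm M v.ofLp) := by
    rw [EuclideanSpace.inner_eq_star_dotProduct, quadForm, star_star_dotProduct,
      dotProduct_comm]
    rfl
  rw [hinner]
  exact Complex.conj_eq_iff_im.mpr (by simp [h])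

lemma posSemidef_of_quadForm_nonneg {M : Matrix ι ι ℂ} (h : ∀ y, 0 ≤ quadForm M y) :
    M.PosSemidef :=
  .of_dotProduct_mulVec_nonneg
    (isHermitian_of_quadForm_im_eq_zero fun y => (Complex.nonneg_iff.mp (h y)).2.symm) h

lemma forall_le_quadForm_of_forall_norm_eq_one {M : Matrix ι ι ℂ} {c : ℝ}
    (h : ∀ w : ι → ℂ, ‖toLp 2 w‖ = 1 → c ≤ (quadForm M w).re) (y : ι → ℂ) :
    c * ‖toLp 2 y‖ ^ 2 ≤ (quadForm M y).re := by
  rcases eq_or_ne y 0 with rfl | hy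
  · simp [quadForm]
  have hpos : 0 < ‖toLp 2 y‖ := norm_pos_iff.mpr (by simpa using hy)
  have hunit := h (((‖toLp 2 y‖⁻¹ : ℝ) : ℂ) • y) (by
    rw [WithLp.toLp_smul, norm_smul, Complex.norm_real, norm_inv, norm_norm,
      inv_mul_cancel₀ hpos.ne'])
  rwa [quadForm_real_smul, Complex.re_ofReal_mul, inv_pow, ← div_eq_inv_mul,
    le_div_iff₀ (by positivity)] at hunit

lemma exists_eventually_forall_le_quadForm {M : Matrix ι ι ℂ}
    (h : ∀ y, y ≠ 0 → 0 < (quadForm M y).re) :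
    ∃ c : ℝ, 0 < c ∧ ∀ᶠ M' in 𝓝 M, ∀ y, c * ‖toLp 2 y‖ ^ 2 ≤ (quadForm M' y).re := by
  have hcont : Continuous fun z : Matrix ι ι ℂ × EuclideanSpace ℂ ι =>
      (quadForm z.1 z.2.ofLp).re :=
    Complex.continuous_re.comp (continuous_quadForm.comp (by fun_prop :
      Continuous fun z : Matrix ι ι ℂ × EuclideanSpace ℂ ι => (z.1, z.2.ofLp)))
  have hcompact := isCompact_sphere (0 : EuclideanSpace ℂ ι) 1
  obtain ⟨c, hc, hle⟩ := hcompact.exists_forall_le' (a := 0)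
    (hcont.comp (Continuous.prodMk_right M)).continuousOn fun w hw =>
      h w.ofLp (by rintro h0; simp [(WithLp.ofLp_eq_zero 2).mp h0] at hw)
  refine ⟨c / 2, half_pos hc, ?_⟩
  have hnear := hcompact.eventually_forall_of_forall_eventually (x₀ := M)
    (P := fun M' w => c / 2 < (quadForm M' w.ofLp).re) fun w hw =>
      hcont.continuousAt.eventually (lt_mem_nhds ((half_lt_self hc).trans_le (hle w hw)))
  filter_upwards [hnear] with M' hM'
  exact forall_le_quadForm_of_forall_norm_eq_one fun w hw => (hM' (toLp 2 w) (by simpa using hw)).le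

lemma exists_forall_le_quadForm {M : Matrix ι ι ℂ} (h : ∀ y, y ≠ 0 → 0 < (quadForm M y).re) :
    ∃ c : ℝ, 0 < c ∧ ∀ y, c * ‖toLp 2 y‖ ^ 2 ≤ (quadForm M y).re := by
  obtain ⟨c, hc, hM⟩ := exists_eventually_forall_le_quadForm h
  exact ⟨c, hc, hM.self_of_nhds⟩

lemma norm_apply_le_div_of_mul_sq_le {y : ι → ℂ} {c K : ℝ} (hc : 0 < c) (hK : 0 ≤ K) {j : ι}
    (h : c * ‖toLp 2 y‖ ^ 2 ≤ K * ‖y j‖) (i : ι) : ‖y i‖ ≤ K / c := by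
  refine (PiLp.norm_apply_le (toLp 2 y) i).trans ?_
  rw [le_div_iff₀ hc, mul_comm]
  rcases (norm_nonneg (toLp 2 y)).eq_or_lt with h0 | hpos
  · rwa [← h0, mul_zero]
  · refine le_of_mul_le_mul_right ?_ hpos
    calc c * ‖toLp 2 y‖ * ‖toLp 2 y‖ = c * ‖toLp 2 y‖ ^ 2 := by ring
      _ ≤ K * ‖y j‖ := h
      _ ≤ K * ‖toLp 2 y‖ := mul_le_mul_of_nonneg_left (PiLp.norm_apply_le (toLp 2 y) j) hK

-- `1 + ε R` is positive definite for small `ε`, since it is close to `1`.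
lemma exists_posDef_smul_one_add {ι : Type*} [Finite ι] [DecidableEq ι] {R : Matrix ι ι ℂ}
    (hR : R.IsHermitian) : ∃ μ : ℝ, 0 < μ ∧ ((μ : ℂ) • (1 : Matrix ι ι ℂ) + R).PosDef := by
  have := Fintype.ofFinite ι
  have hone : ∀ y : ι → ℂ, y ≠ 0 → 0 < (quadForm 1 y).re := fun y hy =>
    (posDef_iff_quadForm_pos isHermitian_one).mp PosDef.one y hy
  obtain ⟨c, hc, hnear⟩ := exists_eventually_forall_le_quadForm hone
  have hlim : Tendsto (fun ε : ℝ => 1 + (ε : ℂ) • R) (𝓝[>] 0) (𝓝 1) :=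
    (Continuous.tendsto' (by fun_prop) _ _ (by simp)).mono_left nhdsWithin_le_nhds
  obtain ⟨ε, hε, hpos⟩ := (hlim.eventually hnear |>.and self_mem_nhdsWithin).exists
  have hsmul : ((ε⁻¹ : ℝ) : ℂ) • (1 : Matrix ι ι ℂ) + R = ((ε⁻¹ : ℝ) : ℂ) • (1 + (ε : ℂ) • R) := by
    rw [smul_add, smul_smul, ← Complex.ofReal_mul, inv_mul_cancel₀ (ne_of_gt hpos),
      Complex.ofReal_one, one_smul]
  refine ⟨ε⁻¹, inv_pos.mpr hpos, ?_⟩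
  rw [hsmul]
  refine PosDef.smul ((posDef_iff_quadForm_pos ?_).mpr fun y hy => ?_)
    (Complex.zero_lt_real.mpr (inv_pos.mpr hpos))
  · exact isHermitian_one.add (by simp [IsHermitian, hR.eq])
  · have : 0 < ‖toLp 2 y‖ := norm_pos_iff.mpr (by simpa using hy)
    exact (by positivity : 0 < c * ‖toLp 2 y‖ ^ 2).trans_le (hε y)

open scoped MatrixOrder in
lemma posSemidef_map_ofReal {ι : Type*} [Finite ι] {A : Matrix ι ι ℝ} (h : A.PosSemidef) :
    (A.map Complex.ofReal).PosSemidef := by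
  classical
  have := Fintype.ofFinite ι
  obtain ⟨B, rfl⟩ := CStarAlgebra.nonneg_iff_eq_star_mul_self.mp h.nonneg
  have hmap : (star B * B).map Complex.ofReal =
      (B.map Complex.ofReal)ᴴ * B.map Complex.ofReal := by
    ext i j
    simp [mul_apply]
  rw [hmap]
  exact posSemidef_conjTranspose_mul_self _

lemma posDef_map_ofReal_iff {ι : Type*} [Finite ι] {A : Matrix ι ι ℝ} :
    (A.map Complex.ofReal).PosDef ↔ A.PosDef := by
  classical
  have := Fintype.ofFinite ι
  constructor <;> intro h
  · refine .of_dotProduct_mulVec_pos ?_ fun x hx => ?_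
    · ext i j
      simpa using h.isHermitian.apply i j
    · have hpos := h.dotProduct_mulVec_pos (x := Complex.ofReal ∘ x)
        (by simpa [funext_iff] using hx)
      have hval : star (Complex.ofReal ∘ x) ⬝ᵥ A.map Complex.ofReal *ᵥ (Complex.ofReal ∘ x) =
          ((star x ⬝ᵥ A *ᵥ x : ℝ) : ℂ) := by
        simp [dotProduct, mulVec]
      rwa [hval, Complex.zero_lt_real] at hpos
  · refine (posSemidef_map_ofReal h.posSemidef).posDef_iff_det_ne_zero.mpr ?_
    rw [show A.map Complex.ofReal = Complex.ofRealHom.mapMatrix A from rfl, ← RingHom.map_det]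
    simpa using h.det_pos.ne'

variable (M : Matrix (Fin n) (Fin n) ℂ)

lemma isHermitian_niKer : (niKer M).IsHermitian := by
  rw [IsHermitian, niKer, conjTranspose_smul, conjTranspose_sub, conjTranspose_conjTranspose,
    RCLike.star_def, Complex.conj_I, neg_smul, ← smul_neg, neg_sub]

lemma quadForm_niKer (y : Fin n → ℂ) :
    quadForm (niKer M) y = ((-2 * (quadForm M y).im : ℝ) : ℂ) := by
  rw [niKer, quadForm_smul, quadForm_sub, quadForm_conjTranspose]
  apply Complex.ext <;> (simp; try ring)

lemma posSemidef_niKer_iff : (niKer M).PosSemidef ↔ ∀ y, (quadForm M y).im ≤ 0 := by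
  rw [posSemidef_iff_dotProduct_mulVec, and_iff_right (isHermitian_niKer M)]
  refine forall_congr' fun y => ?_
  change 0 ≤ quadForm (niKer M) y ↔ _
  rw [quadForm_niKer, Complex.zero_le_real]
  constructor <;> intro h <;> linarith

lemma posDef_niKer_iff : (niKer M).PosDef ↔ ∀ y, y ≠ 0 → (quadForm M y).im < 0 := by
  rw [posDef_iff_quadForm_pos (isHermitian_niKer M)]
  refine forall₂_congr fun y _ => ?_
  rw [quadForm_niKer, Complex.ofReal_re]
  constructor <;> intro h <;> linarith

end QuadraticForms

section TransferMatrices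

variable {G H : Matrix (Fin n) (Fin n) (RatFunc ℝ)} {s : ℂ}

lemma not_hasPole_iff : ¬ HasPole G s ↔ G ∈ (regularAt s).matrix := by
  simp only [HasPole, not_exists]
  rfl

lemma memRHinf_iff {m : Type*} [Fintype m] [DecidableEq m] {G : Matrix m m (RatFunc ℝ)} :
    MemRHinf G ↔ G ∈ rhInf.matrix :=
  ⟨fun h i j => ⟨h.1 i j, fun s hs => h.2 s hs i j⟩,
    fun h => ⟨fun i j => (h i j).1, fun s hs i j => (h i j).2 s hs⟩⟩

lemma MemRHinf.mem_regularAt_matrix (h : MemRHinf G) (hs : 0 ≤ s.re) :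
    G ∈ (regularAt s).matrix := fun i j => h.2 s hs i j

lemma evalM_mapMatrix_subtype (G : Matrix (Fin n) (Fin n) (regularAt s)) :
    evalM ((regularAt s).subtype.mapMatrix G) s = (evalHom s).mapMatrix G := rfl

lemma exists_mapMatrix_subtype_eq (hG : G ∈ (regularAt s).matrix) :
    ∃ G' : Matrix (Fin n) (Fin n) (regularAt s), (regularAt s).subtype.mapMatrix G' = G :=
  ⟨of fun i j => ⟨G i j, hG i j⟩, rfl⟩

lemma evalM_one (s : ℂ) : evalM (1 : Matrix (Fin n) (Fin n) (RatFunc ℝ)) s = 1 := by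
  rw [← map_one (regularAt s).subtype.mapMatrix, evalM_mapMatrix_subtype, map_one]

lemma evalM_sub (hG : G ∈ (regularAt s).matrix) (hH : H ∈ (regularAt s).matrix) :
    evalM (G - H) s = evalM G s - evalM H s := by
  obtain ⟨G, rfl⟩ := exists_mapMatrix_subtype_eq hG
  obtain ⟨H, rfl⟩ := exists_mapMatrix_subtype_eq hH
  rw [← map_sub, evalM_mapMatrix_subtype, map_sub]
  rfl

lemma evalM_mul (hG : G ∈ (regularAt s).matrix) (hH : H ∈ (regularAt s).matrix) :
    evalM (G * H) s = evalM G s * evalM H s := by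
  obtain ⟨G, rfl⟩ := exists_mapMatrix_subtype_eq hG
  obtain ⟨H, rfl⟩ := exists_mapMatrix_subtype_eq hH
  rw [← map_mul, evalM_mapMatrix_subtype, map_mul]
  rfl

lemma isUnit_det_of_evalM_det_ne_zero (hG : G ∈ (regularAt s).matrix)
    (hdet : (evalM G s).det ≠ 0) :
    IsUnit G.det ∧ G⁻¹ ∈ (regularAt s).matrix ∧ evalM G⁻¹ s = (evalM G s)⁻¹ := by
  obtain ⟨G, rfl⟩ := exists_mapMatrix_subtype_eq hG
  rw [evalM_mapMatrix_subtype, ← RingHom.map_det] at hdet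
  have hunit : IsUnit G.det := isUnit_of_evalHom_ne_zero hdet
  have hinv : ((regularAt s).subtype.mapMatrix G)⁻¹ = (regularAt s).subtype.mapMatrix G⁻¹ :=
    inv_eq_right_inv (by rw [← map_mul, mul_nonsing_inv _ hunit, map_one])
  refine ⟨?_, ?_, ?_⟩
  · rw [← RingHom.map_det]
    exact hunit.map _
  · rw [hinv]
    exact fun i j => (G⁻¹ i j).2
  · rw [hinv, evalM_mapMatrix_subtype, evalM_mapMatrix_subtype]
    exact (inv_eq_right_inv (by rw [← map_mul, mul_nonsing_inv _ hunit, map_one])).symm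

lemma star_mem_regularAt_matrix : G ∈ (regularAt (star s)).matrix ↔ G ∈ (regularAt s).matrix :=
  forall₂_congr fun _ _ => star_mem_regularAt

lemma evalM_star (G : Matrix (Fin n) (Fin n) (RatFunc ℝ)) (s : ℂ) :
    evalM G (star s) = (evalM G s).map star := by
  ext i j
  exact evalC_star (G i j) s

lemma star_jw (ω : ℝ) : star (jw ω) = jw (-ω) := by simp [jw]

lemma quadForm_evalM_jw_neg (G : Matrix (Fin n) (Fin n) (RatFunc ℝ)) (ω : ℝ) (y : Fin n → ℂ) :
    quadForm (evalM G (jw (-ω))) y = star (quadForm (evalM G (jw ω)) (star y)) := by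
  rw [← star_jw, evalM_star, quadForm_map_star]

lemma evalM_zero_eq_map_ofReal (G : Matrix (Fin n) (Fin n) (RatFunc ℝ)) :
    evalM G 0 = (evalR G 0).map Complex.ofReal := by
  ext i j
  rw [← Complex.ofReal_zero]
  exact evalC_ofReal (G i j) 0

lemma continuousAt_evalM (hG : G ∈ (regularAt s).matrix) : ContinuousAt (evalM G) s :=
  continuousAt_pi.mpr fun i => continuousAt_pi.mpr fun j => continuousAt_evalC (hG i j)

lemma eval_sum_mul_prod_erase_div {κ : Type*} [Fintype κ] [DecidableEq κ] (c : κ → ℂ)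
    (a b : κ → ℂ[X]) {s : ℂ} (hs : ∀ k, (b k).eval s ≠ 0) :
    (∑ k, C (c k) * (a k * ∏ l ∈ Finset.univ.erase k, b l)).eval s / (∏ k, b k).eval s =
      ∑ k, c k * ((a k).eval s / (b k).eval s) := by
  rw [eval_finsetSum, Finset.sum_div]
  refine Finset.sum_congr rfl fun k _ => ?_
  have hrest : (∏ l ∈ Finset.univ.erase k, b l).eval s ≠ 0 := by
    rw [eval_prod]
    exact Finset.prod_ne_zero_iff.mpr fun l _ => hs l
  rw [← Finset.mul_prod_erase _ b (Finset.mem_univ k), eval_mul, eval_mul, eval_mul, eval_C,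
    mul_div_assoc, mul_div_mul_right _ _ hrest]

lemma degree_sum_mul_prod_erase_add_le {κ : Type*} [Fintype κ] [DecidableEq κ] (c : κ → ℂ)
    {a b : κ → ℂ[X]} {d : ℕ} (h : ∀ k, (a k).degree + d ≤ (b k).degree) :
    (∑ k, C (c k) * (a k * ∏ l ∈ Finset.univ.erase k, b l)).degree + d ≤
      (∏ k, b k).degree := by
  rw [← degree_X_pow (R := ℂ), ← degree_mul, Finset.sum_mul]
  refine (degree_sum_le _ _).trans (Finset.sup_le fun k _ => ?_)
  rw [← Finset.mul_prod_erase _ b (Finset.mem_univ k)]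
  calc (C (c k) * (a k * ∏ l ∈ Finset.univ.erase k, b l) * X ^ d).degree
      = (C (c k)).degree + (((a k).degree + d) + (∏ l ∈ Finset.univ.erase k, b l).degree) := by
        simp only [degree_mul, degree_X_pow]
        ac_rfl
    _ ≤ 0 + ((b k).degree + (∏ l ∈ Finset.univ.erase k, b l).degree) :=
        add_le_add degree_C_le (add_le_add_left (h k) _)
    _ = _ := by rw [zero_add, degree_mul]

lemma exists_fraction_eq_quadForm (G : Matrix (Fin n) (Fin n) (RatFunc ℝ)) (u : Fin n → ℂ) :
    ∃ p q : ℂ[X], (∀ s, q.eval s ≠ 0 ↔ G ∈ (regularAt s).matrix) ∧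
      (∀ s, q.eval s ≠ 0 → p.eval s / q.eval s = quadForm (evalM G s) u) ∧
      ∀ d : ℕ, (∀ i j, (G i j).num.degree + d ≤ (G i j).denom.degree) →
        p.degree + d ≤ q.degree := by
  let den (k : Fin n × Fin n) : ℂ[X] := (G k.1 k.2).denom.map (algebraMap ℝ ℂ)
  let num (k : Fin n × Fin n) : ℂ[X] := (G k.1 k.2).num.map (algebraMap ℝ ℂ)
  have hden (s : ℂ) : (∏ k, den k).eval s ≠ 0 ↔ ∀ k, (den k).eval s ≠ 0 := by
    rw [eval_prod, Finset.prod_ne_zero_iff]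
    simp only [Finset.mem_univ, true_imp_iff]
  refine ⟨∑ k, C (star (u k.1) * u k.2) * (num k * ∏ l ∈ Finset.univ.erase k, den l),
    ∏ k, den k, fun s => (hden s).trans ?_, fun s hs => ?_, fun d hd => ?_⟩
  · simp only [den, eval_map_algebraMap, Prod.forall]
    rfl
  · rw [eval_sum_mul_prod_erase_div _ _ _ ((hden s).mp hs), Fintype.sum_prod_type]
    simp only [quadForm, dotProduct, mulVec, Finset.mul_sum]
    refine Finset.sum_congr rfl fun i _ => Finset.sum_congr rfl fun j _ => ?_
    rw [eval_map_algebraMap, eval_map_algebraMap, ← evalC_eq_div, mul_assoc, mul_comm (u j)]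
    rfl
  · have hdeg (k) : (num k).degree + d ≤ (den k).degree := by
      rw [degree_map, degree_map]
      exact hd k.1 k.2
    exact degree_sum_mul_prod_erase_add_le _ hdeg

end TransferMatrices

section NegativeImaginary

variable {G : Matrix (Fin n) (Fin n) (RatFunc ℝ)}

lemma IsSNI.isNI (h : IsSNI G) : IsNI G := by
  have hreg {s : ℂ} (hs : 0 ≤ s.re) : ¬ HasPole G s := fun ⟨i, j, hpole⟩ => h.1.2 s hs i j hpole
  exact ⟨h.1.1, fun s hs => hreg hs.le, fun ω hω _ => (h.2 ω hω).posSemidef,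
    fun ω _ hpole => absurd hpole (hreg (jw_re ω).ge), fun hpole => absurd hpole (hreg le_rfl)⟩

lemma re_jw_mul (ω : ℝ) (z : ℂ) : (jw ω * z).re = -(ω * z.im) := by
  simp [jw]

lemma jw_zero : jw 0 = 0 := by simp [jw]

lemma re_div_eq (z s : ℂ) : (z / s).re = (star s * z).re / Complex.normSq s := by
  simp [Complex.div_re, add_div, mul_comm]

lemma tendsto_residue_zero_div_X_mul {p q : ℂ[X]} (hq : q.eval 0 ≠ 0) (hp : p.eval 0 = 0) :
    Tendsto (fun s => (s - 0) * (p.eval s / (X * q).eval s)) (𝓝[≠] 0) (𝓝 0) := by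
  have hlim : Tendsto (fun s => p.eval s / q.eval s) (𝓝[≠] 0) (𝓝 (p.eval 0 / q.eval 0)) :=
    (p.continuousAt.div q.continuousAt hq).tendsto.mono_left nhdsWithin_le_nhds
  rw [hp, zero_div] at hlim
  refine hlim.congr' ?_
  filter_upwards [self_mem_nhdsWithin] with s (hs : s ≠ 0)
  rw [sub_zero, eval_mul, eval_X, mul_div_assoc', mul_div_mul_left _ _ hs]

namespace IsNI

lemma mem_regularAt_matrix (h : IsNI G) {s : ℂ} (hs : 0 < s.re) : G ∈ (regularAt s).matrix :=
  not_hasPole_iff.mp (h.2.1 s hs)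

lemma re_jw_mul_quadForm_nonneg (h : IsNI G) {ω : ℝ} (hreg : G ∈ (regularAt (jw ω)).matrix)
    (y : Fin n → ℂ) : 0 ≤ (jw ω * quadForm (evalM G (jw ω)) y).re := by
  have him {ω : ℝ} (hω : 0 < ω) (hreg : G ∈ (regularAt (jw ω)).matrix) (y : Fin n → ℂ) :
      (quadForm (evalM G (jw ω)) y).im ≤ 0 :=
    (posSemidef_niKer_iff _).mp (h.2.2.1 ω hω (not_hasPole_iff.mpr hreg)) y
  rw [re_jw_mul]
  rcases lt_trichotomy ω 0 with hneg | rfl | hpos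
  · rw [← neg_neg ω, ← star_jw, star_mem_regularAt_matrix] at hreg
    have := him (neg_pos.mpr hneg) hreg (star y)
    rw [← neg_neg ω, quadForm_evalM_jw_neg, RCLike.star_def, Complex.conj_im]
    nlinarith
  · simp
  · nlinarith [him hpos hreg y]

lemma exists_residue_of_pos (h : IsNI G) {ω : ℝ} (hω : 0 < ω) (hpole : HasPole G (jw ω))
    (u : Fin n → ℂ) : ∃ r : ℂ, 0 ≤ r ∧
      Tendsto (fun s => (s - jw ω) * (s * quadForm (evalM G s) u)) (𝓝[≠] jw ω) (𝓝 r) := by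
  obtain ⟨R, hR, hlim⟩ := h.2.2.2.1 ω hω hpole
  have hquad := ((continuous_quadForm_left u).tendsto R).comp hlim
  have hid : Tendsto (fun s : ℂ => s) (𝓝[≠] jw ω) (𝓝 (jw ω)) := nhdsWithin_le_nhds
  refine ⟨ω * quadForm R u,
    mul_nonneg (Complex.zero_le_real.mpr hω.le) (hR.dotProduct_mulVec_nonneg u), ?_⟩
  have hω_eq : jw ω * -Complex.I = ω := by
    rw [jw]
    linear_combination (-ω : ℂ) * Complex.I_mul_I
  rw [← hω_eq]
  refine ((hid.mul_const (-Complex.I)).mul hquad).congr fun s => ?_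
  simp only [Function.comp_apply, quadForm_smul]
  linear_combination (-s * (s - jw ω) * quadForm (evalM G s) u) * Complex.I_mul_I

lemma exists_residue_of_neg (h : IsNI G) {ω : ℝ} (hω : ω < 0) (hpole : HasPole G (jw ω))
    (u : Fin n → ℂ) : ∃ r : ℂ, 0 ≤ r ∧
      Tendsto (fun s => (s - jw ω) * (s * quadForm (evalM G s) u)) (𝓝[≠] jw ω) (𝓝 r) := by
  have hpole' : HasPole G (jw (-ω)) := by
    by_contra hreg
    rw [not_hasPole_iff, ← star_jw, star_mem_regularAt_matrix] at hreg
    exact not_hasPole_iff.mpr hreg hpole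
  obtain ⟨r, hr, hlim⟩ := h.exists_residue_of_pos (neg_pos.mpr hω) hpole' (star u)
  have hstar : Tendsto star (𝓝[≠] jw ω) (𝓝[≠] jw (-ω)) := by
    rw [← star_jw]
    exact continuous_star.continuousWithinAt.tendsto_nhdsWithin fun s hs => star_injective.ne hs
  refine ⟨star r, star_nonneg_iff.mpr hr, ((hlim.comp hstar).star).congr fun s => ?_⟩
  simp only [Function.comp_apply, evalM_star, quadForm_map_star, ← star_jw, star_mul', star_sub,
    star_star]

lemma exists_residue_zero (h : IsNI G) (hpole : HasPole G 0) (u : Fin n → ℂ) :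
    ∃ r : ℂ, 0 ≤ r ∧
      Tendsto (fun s => (s - 0) * (s * quadForm (evalM G s) u)) (𝓝[≠] 0) (𝓝 r) := by
  obtain ⟨-, R, hR, hlim⟩ := h.2.2.2.2 hpole
  refine ⟨quadForm R u, hR.dotProduct_mulVec_nonneg u,
    (((continuous_quadForm_left u).tendsto R).comp hlim).congr fun s => ?_⟩
  rw [Function.comp_apply, quadForm_smul]
  ring

lemma exists_residue (h : IsNI G) {ω : ℝ} (hpole : HasPole G (jw ω)) (u : Fin n → ℂ) :
    ∃ r : ℂ, 0 ≤ r ∧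
      Tendsto (fun s => (s - jw ω) * (s * quadForm (evalM G s) u)) (𝓝[≠] jw ω) (𝓝 r) := by
  rcases lt_trichotomy ω 0 with hneg | rfl | hpos
  · exact h.exists_residue_of_neg hneg hpole u
  · rw [jw_zero] at hpole ⊢
    exact h.exists_residue_zero hpole u
  · exact h.exists_residue_of_pos hpos hpole u

lemma re_mul_quadForm_nonneg (h : IsNI G) (hsp : StrictlyProper G) {s : ℂ} (hs : 0 < s.re)
    (u : Fin n → ℂ) : 0 ≤ (s * quadForm (evalM G s) u).re := by
  obtain ⟨p, q, hreg, hval, hdeg⟩ := exists_fraction_eq_quadForm G u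
  have hq0 (s : ℂ) (hs : 0 < s.re) : q.eval s ≠ 0 := (hreg s).mpr (h.mem_regularAt_matrix hs)
  have hq : q ≠ 0 := fun hzero => hq0 s hs (by rw [hzero, eval_zero])
  have hval' {s : ℂ} (hs : q.eval s ≠ 0) :
      (X * p).eval s / q.eval s = s * quadForm (evalM G s) u := by
    rw [eval_mul, eval_X, mul_div_assoc, hval s hs]
  have hpr : IsPosRealFraction (X * p) q :=
    { degree_le := by
        rw [degree_mul, degree_X, add_comm]
        exact hdeg 1 fun i j => Nat.WithBot.add_one_le_of_lt (hsp i j)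
      eval_ne_zero := hq0
      re_nonneg := by
        filter_upwards [eventually_cofinite_eval_jw_ne_zero hq] with ω hω
        rw [hval' hω]
        exact h.re_jw_mul_quadForm_nonneg ((hreg _).mp hω) u
      residue_nonneg := fun ω hω => by
        have hpole : HasPole G (jw ω) :=
          not_not.mp (not_hasPole_iff.not.mpr ((hreg _).not.mp (not_not.mpr hω)))
        obtain ⟨r, hr, hlim⟩ := h.exists_residue hpole u
        refine ⟨r, hr, hlim.congr' ?_⟩
        filter_upwards [eventually_eval_ne_zero hq (jw ω)] with s hs
        rw [hval' hs] }
  rw [← hval' (hq0 s hs)]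
  exact hpr.re_div_nonneg hs

lemma im_quadForm_evalM_zero_nonpos (h : IsNI G) (hmem : MemRHinf G) (y : Fin n → ℂ) :
    (quadForm (evalM G 0) y).im ≤ 0 := by
  have hcont : ContinuousAt (fun ω => (quadForm (evalM G (jw ω)) y).im) 0 := by
    have hG : ContinuousAt (evalM G) (jw 0) :=
      continuousAt_evalM (hmem.mem_regularAt_matrix (jw_re 0).ge)
    exact Complex.continuous_im.continuousAt.comp <|
      (continuous_quadForm_left y).continuousAt.comp <| hG.comp continuous_jw.continuousAt
  rw [← jw_zero]
  refine le_of_tendsto (hcont.tendsto.mono_left (nhdsWithin_le_nhds (s := Set.Ioi 0))) ?_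
  filter_upwards [self_mem_nhdsWithin] with ω hω
  exact (posSemidef_niKer_iff _).mp (h.2.2.1 ω hω
    (not_hasPole_iff.mpr (hmem.mem_regularAt_matrix (jw_re ω).ge))) y

lemma isHermitian_evalM_zero (h : IsNI G) (hmem : MemRHinf G) : (evalM G 0).IsHermitian := by
  refine isHermitian_of_quadForm_im_eq_zero fun y => ?_
  refine le_antisymm (h.im_quadForm_evalM_zero_nonpos hmem y) ?_
  have hstar := h.im_quadForm_evalM_zero_nonpos hmem (star y)
  rw [← star_zero, evalM_star, quadForm_map_star, star_star] at hstar
  simpa using hstar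

lemma im_quadForm_evalM_zero (h : IsNI G) (hmem : MemRHinf G) (y : Fin n → ℂ) :
    (quadForm (evalM G 0) y).im = 0 :=
  (h.isHermitian_evalM_zero hmem).im_star_dotProduct_mulVec_self y

lemma re_sub_div_nonneg (h : IsNI G) (hmem : MemRHinf G) {s : ℂ} (hs : 0 < s.re)
    (y : Fin n → ℂ) :
    0 ≤ ((quadForm (evalM G 0) y - quadForm (evalM G s) y) / s).re := by
  set c : ℂ := quadForm (evalM G 0) y with hc
  obtain ⟨p, q, hreg, hval, hdeg⟩ := exists_fraction_eq_quadForm G y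
  have hq0 (s : ℂ) (hs : 0 ≤ s.re) : q.eval s ≠ 0 := (hreg s).mpr (hmem.mem_regularAt_matrix hs)
  have hval' {s : ℂ} (hs : 0 ≤ s.re) :
      (C c * q - p).eval s / (X * q).eval s = (c - quadForm (evalM G s) y) / s := by
    rw [← hval s (hq0 s hs), eval_sub, eval_mul, eval_C, eval_mul, eval_X]
    have := hq0 s hs
    field_simp
  have hpr : IsPosRealFraction (C c * q - p) (X * q) :=
    { degree_le := by
        have hp : p.degree ≤ q.degree := by simpa using hdeg 0 (by simpa using hmem.1)
        have hcq : (C c * q).degree ≤ q.degree := by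
          simpa [degree_mul] using add_le_add_left (degree_C_le (a := c)) q.degree
        refine (degree_sub_le _ _).trans ((max_le hcq hp).trans ?_)
        simpa [degree_mul, add_comm] using add_le_add_left zero_le_one q.degree
      eval_ne_zero := fun s hs => by
        rw [eval_mul, eval_X]
        exact mul_ne_zero (fun h0 => by simp [h0] at hs) (hq0 s hs.le)
      re_nonneg := Eventually.of_forall fun ω => by
        have hω := h.re_jw_mul_quadForm_nonneg (hmem.mem_regularAt_matrix (jw_re ω).ge) y
        rw [re_jw_mul] at hω
        rw [hval' (jw_re ω).ge, re_div_eq, star_jw, re_jw_mul, Complex.sub_im,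
          h.im_quadForm_evalM_zero hmem]
        exact div_nonneg (by linarith) (Complex.normSq_nonneg _)
      residue_nonneg := fun ω hω => by
        rw [eval_mul, eval_X, mul_eq_zero, or_iff_left (hq0 _ (jw_re ω).ge)] at hω
        rw [hω]
        refine ⟨0, le_rfl, tendsto_residue_zero_div_X_mul (hq0 0 le_rfl) ?_⟩
        rw [eval_sub, eval_mul, eval_C, hc, ← hval 0 (hq0 0 le_rfl),
          div_mul_cancel₀ _ (hq0 0 le_rfl), sub_self] }
  rw [← hval' hs.le]
  exact hpr.re_div_nonneg hs

lemma re_star_mul_quadForm_le (h : IsNI G) (hmem : MemRHinf G) {s : ℂ} (hs : 0 < s.re)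
    (y : Fin n → ℂ) :
    (star s * quadForm (evalM G s) y).re ≤ s.re * (quadForm (evalM G 0) y).re := by
  have hs0 : s ≠ 0 := fun h0 => by simp [h0] at hs
  have hreal : (star s * quadForm (evalM G 0) y).re = s.re * (quadForm (evalM G 0) y).re := by
    simp [h.im_quadForm_evalM_zero hmem]
  have hnonneg := h.re_sub_div_nonneg hmem hs y
  rwa [re_div_eq, mul_sub, Complex.sub_re, hreal, le_div_iff₀ (Complex.normSq_pos.mpr hs0),
    zero_mul, sub_nonneg] at hnonneg

end IsNI

end NegativeImaginary

section Sufficiency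

open WithLp (toLp)

section PointwiseLoop

variable {ι : Type*} [Fintype ι] {P C : Matrix ι ι ℂ} {s : ℂ} {δ : ℝ}

-- Pair the loop equation with `u = w + C y`: since `y = P u`, `u* P u = w* y + conj (y* C y)`.
lemma mul_norm_sq_le_of_eq_mulVec (hP : ∀ u, 0 ≤ (s * quadForm P u).re)
    (hC : ∀ y, δ * ‖toLp 2 y‖ ^ 2 ≤ (quadForm (-star s • C) y).re) {w y : ι → ℂ}
    (hy : y = P *ᵥ (w + C *ᵥ y)) : δ * ‖toLp 2 y‖ ^ 2 ≤ (s * (star w ⬝ᵥ y)).re := by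
  have hpair : quadForm P (w + C *ᵥ y) = star w ⬝ᵥ y + star (quadForm C y) := by
    rw [quadForm, ← hy, star_add, add_dotProduct, quadForm, star_star_dotProduct]
  have hpos := hP (w + C *ᵥ y)
  rw [hpair, mul_add, Complex.add_re] at hpos
  have hconj : (quadForm (-star s • C) y).re = -(s * star (quadForm C y)).re := by
    rw [quadForm_smul]
    simp
  linarith [hC y]

variable [DecidableEq ι]

lemma det_one_sub_mul_ne_zero (hP : ∀ u, 0 ≤ (s * quadForm P u).re) (hδ : 0 < δ)
    (hC : ∀ y, δ * ‖toLp 2 y‖ ^ 2 ≤ (quadForm (-star s • C) y).re) : (1 - P * C).det ≠ 0 := by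
  intro hdet
  obtain ⟨y, hy, hker⟩ := exists_mulVec_eq_zero_iff.mpr hdet
  rw [sub_mulVec, one_mulVec, ← mulVec_mulVec, sub_eq_zero] at hker
  have hle := mul_norm_sq_le_of_eq_mulVec (w := 0) hP hC (by rwa [zero_add])
  rw [star_zero, zero_dotProduct, mul_zero, Complex.zero_re] at hle
  have : 0 < ‖toLp 2 y‖ := norm_pos_iff.mpr (by simpa using hy)
  exact hle.not_gt (by positivity)

lemma norm_inv_one_sub_mul_mul_apply_le (hP : ∀ u, 0 ≤ (s * quadForm P u).re) (hδ : 0 < δ)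
    (hC : ∀ y, δ * ‖toLp 2 y‖ ^ 2 ≤ (quadForm (-star s • C) y).re) (i j : ι) :
    ‖((1 - P * C)⁻¹ * P) i j‖ ≤ ‖s‖ / δ := by
  set y : ι → ℂ := ((1 - P * C)⁻¹ * P).col j with hy
  have hunit := isUnit_iff_ne_zero.mpr (det_one_sub_mul_ne_zero hP hδ hC)
  have hloop : y = P *ᵥ (Pi.single j 1 + C *ᵥ y) := by
    have hmul : (1 - P * C) *ᵥ y = P *ᵥ Pi.single j 1 := by
      rw [hy, ← mulVec_single_one, mulVec_mulVec, mul_nonsing_inv_cancel_left _ _ hunit]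
    rw [sub_mulVec, one_mulVec, sub_eq_iff_eq_add] at hmul
    rw [mulVec_add, mulVec_mulVec, ← hmul]
  have hle := mul_norm_sq_le_of_eq_mulVec hP hC hloop
  rw [← Pi.single_star, star_one, single_one_dotProduct] at hle
  refine norm_apply_le_div_of_mul_sq_le (y := y) (j := j) hδ (norm_nonneg s) (hle.trans ?_) i
  rw [← norm_mul]
  exact Complex.re_le_norm _

end PointwiseLoop

/-- The closed-loop transfer matrix `(1 - P C)⁻¹ P`, which together with `C` determines all four
blocks of the interconnection `[P, C]`. -/
def closedLoop (P C : Matrix (Fin n) (Fin n) (RatFunc ℝ)) : Matrix (Fin n) (Fin n) (RatFunc ℝ) :=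
  (1 - P * C)⁻¹ * P

variable {P C : Matrix (Fin n) (Fin n) (RatFunc ℝ)}

lemma feedbackStable_of_closedLoop_memRHinf (hdet : (1 - P * C).det ≠ 0) (hC : MemRHinf C)
    (hQ : MemRHinf (closedLoop P C)) : FeedbackStable P C := by
  rw [memRHinf_iff] at hC hQ
  have hinv : (1 - P * C)⁻¹ = 1 + closedLoop P C * C := by
    rw [closedLoop, mul_assoc, ← sub_eq_iff_eq_add]
    have := nonsing_inv_mul _ (isUnit_iff_ne_zero.mpr hdet)
    rwa [mul_sub, mul_one] at this
  have hT : (1 - P * C)⁻¹ ∈ rhInf.matrix := hinv ▸ add_mem (one_mem _) (mul_mem hQ hC)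
  refine ⟨hdet, memRHinf_iff.mpr ?_⟩
  rintro (i | i) (j | j)
  · exact hT i j
  · exact hQ i j
  · exact mul_mem hC hT i j
  · rw [fromBlocks_apply₂₂, mul_assoc]
    exact mul_mem hC hQ i j

section Regularity

variable {s : ℂ} {δ : ℝ} (hPreg : P ∈ (regularAt s).matrix) (hCreg : C ∈ (regularAt s).matrix)
  (hP : ∀ u, 0 ≤ (s * quadForm (evalM P s) u).re) (hδ : 0 < δ)
  (hC : ∀ y, δ * ‖toLp 2 y‖ ^ 2 ≤ (quadForm (-star s • evalM C s) y).re)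
include hPreg hCreg hP hδ hC

lemma isUnit_det_one_sub_mul :
    IsUnit (1 - P * C).det ∧ (1 - P * C)⁻¹ ∈ (regularAt s).matrix ∧
      evalM (1 - P * C)⁻¹ s = (1 - evalM P s * evalM C s)⁻¹ := by
  have heval : evalM (1 - P * C) s = 1 - evalM P s * evalM C s := by
    rw [evalM_sub (one_mem _) (mul_mem hPreg hCreg), evalM_one, evalM_mul hPreg hCreg]
  rw [← heval]
  refine isUnit_det_of_evalM_det_ne_zero (sub_mem (one_mem _) (mul_mem hPreg hCreg)) ?_
  rw [heval]
  exact det_one_sub_mul_ne_zero hP hδ hC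

lemma closedLoop_mem_regularAt_matrix : closedLoop P C ∈ (regularAt s).matrix :=
  mul_mem (isUnit_det_one_sub_mul hPreg hCreg hP hδ hC).2.1 hPreg

lemma norm_evalC_closedLoop_le (i j : Fin n) : ‖evalC (closedLoop P C i j) s‖ ≤ ‖s‖ / δ := by
  obtain ⟨-, hinv, heval⟩ := isUnit_det_one_sub_mul hPreg hCreg hP hδ hC
  change ‖evalM (closedLoop P C) s i j‖ ≤ _
  rw [closedLoop, evalM_mul hinv hPreg, heval]
  exact norm_inv_one_sub_mul_mul_apply_le hP hδ hC i j

end Regularity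

lemma IsSNI.exists_forall_re_mul_le_quadForm (hC : IsSNI C) (h0 : (-evalM C 0).PosDef) :
    ∃ c : ℝ, 0 < c ∧ ∀ s : ℂ, 0 < s.re → ∀ y,
      s.re * c * ‖toLp 2 y‖ ^ 2 ≤ (quadForm (-star s • evalM C s) y).re := by
  obtain ⟨c, hc, hle⟩ := exists_forall_le_quadForm ((posDef_iff_quadForm_pos h0.isHermitian).mp h0)
  refine ⟨c, hc, fun s hs y => ?_⟩
  have hpr := hC.isNI.re_star_mul_quadForm_le hC.1 hs y
  have hdc := hle y
  rw [quadForm_neg, Complex.neg_re] at hdc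
  rw [neg_smul, quadForm_neg, quadForm_smul, Complex.neg_re]
  nlinarith

lemma IsSNI.exists_eventually_forall_le_quadForm (hC : IsSNI C) {ω : ℝ} (hω : 0 < ω) :
    ∃ δ : ℝ, 0 < δ ∧ ∀ᶠ s in 𝓝 (jw ω), ∀ y,
      δ * ‖toLp 2 y‖ ^ 2 ≤ (quadForm (-star s • evalM C s) y).re := by
  have hpos (y : Fin n → ℂ) (hy : y ≠ 0) :
      0 < (quadForm (-star (jw ω) • evalM C (jw ω)) y).re := by
    have := (posDef_niKer_iff _).mp (hC.2 ω hω) y hy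
    rw [neg_smul, quadForm_neg, quadForm_smul, star_jw, Complex.neg_re, re_jw_mul]
    nlinarith
  obtain ⟨δ, hδ, hnear⟩ := NIControl.exists_eventually_forall_le_quadForm hpos
  have hcont : ContinuousAt (fun s => -star s • evalM C s) (jw ω) :=
    continuous_star.neg.continuousAt.smul
      (continuousAt_evalM (hC.1.mem_regularAt_matrix (jw_re ω).ge))
  exact ⟨δ, hδ, hcont.eventually hnear⟩

section ClosedLoop

variable (hP : IsNI P) (hsp : StrictlyProper P) (hC : IsSNI C)
include hP hsp hC

lemma closedLoop_mem_regularAt_jw {ω : ℝ} (hω : 0 < ω) :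
    closedLoop P C ∈ (regularAt (jw ω)).matrix := by
  obtain ⟨δ, hδ, hcoercive⟩ := hC.exists_eventually_forall_le_quadForm hω
  have hnorm : ∀ᶠ s : ℂ in 𝓝 (jw ω), ‖s‖ ≤ ‖jw ω‖ + 1 :=
    continuous_norm.continuousAt.eventually_le_const (by simp)
  have hpath := tendsto_add_ofReal_mul (jw ω) one_ne_zero
  intro i j
  refine mem_regularAt_of_frequently_norm_le (K := (‖jw ω‖ + 1) / δ)
    (hpath.frequently (Eventually.frequently ?_))
  filter_upwards [(hpath.mono_right nhdsWithin_le_nhds).eventually (hcoercive.and hnorm),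
    self_mem_nhdsWithin] with x ⟨hcoercive, hnorm⟩ hx
  have hre : 0 < (jw ω + x * 1).re := by simpa [jw_re] using hx
  refine (norm_evalC_closedLoop_le (hP.mem_regularAt_matrix hre)
    (hC.1.mem_regularAt_matrix hre.le) (hP.re_mul_quadForm_nonneg hsp hre) hδ hcoercive
    i j).trans ?_
  gcongr

variable (h0 : (-evalM C 0).PosDef)
include h0

lemma det_one_sub_mul_ne_zero_of_isNI_of_isSNI : (1 - P * C).det ≠ 0 := by
  obtain ⟨c, hc, hcoercive⟩ := hC.exists_forall_re_mul_le_quadForm h0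
  have hre : 0 < (1 : ℂ).re := by simp
  exact (isUnit_det_one_sub_mul (hP.mem_regularAt_matrix hre) (hC.1.mem_regularAt_matrix hre.le)
    (hP.re_mul_quadForm_nonneg hsp hre) (mul_pos hre hc) (hcoercive 1 hre)).1.ne_zero

lemma closedLoop_mem_regularAt_of_re_pos {s : ℂ} (hs : 0 < s.re) :
    closedLoop P C ∈ (regularAt s).matrix := by
  obtain ⟨c, hc, hcoercive⟩ := hC.exists_forall_re_mul_le_quadForm h0
  exact closedLoop_mem_regularAt_matrix (hP.mem_regularAt_matrix hs)
    (hC.1.mem_regularAt_matrix hs.le) (hP.re_mul_quadForm_nonneg hsp hs) (mul_pos hs hc)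
    (hcoercive s hs)

lemma exists_forall_norm_evalC_closedLoop_ofReal_le :
    ∃ K : ℝ, ∀ x : ℝ, 0 < x → ∀ i j, ‖evalC (closedLoop P C i j) x‖ ≤ K := by
  obtain ⟨c, hc, hcoercive⟩ := hC.exists_forall_re_mul_le_quadForm h0
  refine ⟨1 / c, fun x hx i j => ?_⟩
  have hre : 0 < (x : ℂ).re := by simpa using hx
  refine (norm_evalC_closedLoop_le (hP.mem_regularAt_matrix hre)
    (hC.1.mem_regularAt_matrix hre.le) (hP.re_mul_quadForm_nonneg hsp hre) (mul_pos hre hc)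
    (hcoercive x hre) i j).trans_eq ?_
  rw [Complex.norm_of_nonneg hx.le, Complex.ofReal_re]
  field_simp

lemma closedLoop_mem_regularAt_zero : closedLoop P C ∈ (regularAt 0).matrix := by
  obtain ⟨K, hK⟩ := exists_forall_norm_evalC_closedLoop_ofReal_le hP hsp hC h0
  intro i j
  refine mem_regularAt_of_frequently_norm_le (K := K)
    ((tendsto_add_ofReal_mul 0 one_ne_zero).frequently (Eventually.frequently ?_))
  filter_upwards [self_mem_nhdsWithin] with x hx
  rw [zero_add, mul_one]
  exact hK x hx i j

lemma closedLoop_memRHinf : MemRHinf (closedLoop P C) := by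
  refine ⟨fun i j => ?_, fun s hs => ?_⟩
  · obtain ⟨K, hK⟩ := exists_forall_norm_evalC_closedLoop_ofReal_le hP hsp hC h0
    exact num_degree_le_of_frequently_norm_le
      ((eventually_gt_atTop 0).mono fun x hx => hK x hx i j).frequently
  · change closedLoop P C ∈ (regularAt s).matrix
    rcases hs.lt_or_eq with hpos | haxis
    · exact closedLoop_mem_regularAt_of_re_pos hP hsp hC h0 hpos
    rw [eq_jw_of_re_eq_zero haxis.symm]
    rcases lt_trichotomy s.im 0 with hneg | hzero | hpos
    · rw [← star_mem_regularAt_matrix, star_jw]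
      exact closedLoop_mem_regularAt_jw hP hsp hC (neg_pos.mpr hneg)
    · rw [hzero, jw_zero]
      exact closedLoop_mem_regularAt_zero hP hsp hC h0
    · exact closedLoop_mem_regularAt_jw hP hsp hC hpos

theorem feedbackStable_of_isNI_of_isSNI : FeedbackStable P C :=
  feedbackStable_of_closedLoop_memRHinf
    (det_one_sub_mul_ne_zero_of_isNI_of_isSNI hP hsp hC h0) hC.1
    (closedLoop_memRHinf hP hsp hC h0)

end ClosedLoop

end Sufficiency

section MechanicalSystems

open WithLp (toLp)

section Accretive

variable {ι : Type*} [Fintype ι] [DecidableEq ι] {A : Matrix ι ι ℂ} {s : ℂ} {c : ℝ}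
  (hc : 0 < c) (hA : ∀ y, c * ‖toLp 2 y‖ ^ 2 ≤ (star s * quadForm A y).re)
include hc hA

lemma det_ne_zero_of_coercive : A.det ≠ 0 := by
  intro hdet
  obtain ⟨y, hy, hker⟩ := exists_mulVec_eq_zero_iff.mpr hdet
  have hle := hA y
  rw [quadForm, hker, dotProduct_zero, mul_zero, Complex.zero_re] at hle
  have : 0 < ‖toLp 2 y‖ := norm_pos_iff.mpr (by simpa using hy)
  exact hle.not_gt (by positivity)

lemma mul_norm_sq_inv_mulVec_le (u : ι → ℂ) :
    c * ‖toLp 2 (A⁻¹ *ᵥ u)‖ ^ 2 ≤ (s * quadForm A⁻¹ u).re := by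
  have hsolve : A *ᵥ A⁻¹ *ᵥ u = u := by
    rw [mulVec_mulVec, mul_nonsing_inv _ (det_ne_zero_of_coercive hc hA).isUnit, one_mulVec]
  have hle := hA (A⁻¹ *ᵥ u)
  rwa [quadForm, hsolve, ← star_star_dotProduct, ← star_mul', RCLike.star_def,
    Complex.conj_re] at hle

lemma norm_inv_apply_le (i j : ι) : ‖A⁻¹ i j‖ ≤ ‖s‖ / c := by
  have hle := mul_norm_sq_inv_mulVec_le hc hA (Pi.single j 1)
  rw [quadForm, ← Pi.single_star, star_one, single_one_dotProduct, mulVec_single_one] at hle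
  refine norm_apply_le_div_of_mul_sq_le (y := A⁻¹.col j) (j := j) hc (norm_nonneg s)
    (hle.trans ?_) i
  rw [← norm_mul]
  exact Complex.re_le_norm _

end Accretive

section PositiveRealCriterion

variable {G : Matrix (Fin n) (Fin n) (RatFunc ℝ)}

lemma exists_tendsto_pow_smul_evalM {a : ℂ} {N : ℕ} (h : ∀ i j, poleOrder (G i j) a ≤ N) :
    ∃ L, Tendsto (fun s => (s - a) ^ N • evalM G s) (𝓝[≠] a) (𝓝 L) := by
  choose L hL using fun i j => exists_tendsto_pow_mul_evalC (h i j)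
  exact ⟨of L, tendsto_pi_nhds.mpr fun i => tendsto_pi_nhds.mpr fun j => hL i j⟩

lemma tendsto_pow_smul_evalM_zero (h : NoDoubleOriginPole G) {k : ℕ} (hk : 2 ≤ k) :
    Tendsto (fun s : ℂ => s ^ k • evalM G s) (𝓝[≠] 0) (𝓝 0) := by
  obtain ⟨L, hL⟩ := exists_tendsto_pow_smul_evalM (a := 0) (N := 1) fun i j =>
    (rootMultiplicity_zero_denom (G i j)).symm.trans_le (h i j)
  have hpow : Tendsto (fun s : ℂ => s ^ (k - 1)) (𝓝[≠] 0) (𝓝 0) :=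
    ((continuous_pow (k - 1)).tendsto' 0 0 (zero_pow (by lia))).mono_left nhdsWithin_le_nhds
  have hlim := hpow.smul hL
  rw [zero_smul] at hlim
  refine hlim.congr fun s => ?_
  rw [sub_zero, smul_smul, ← pow_add, Nat.sub_add_cancel (by lia)]

variable (hpr : ∀ s : ℂ, 0 < s.re → ∀ y, 0 ≤ (s * quadForm (evalM G s) y).re)
include hpr

lemma posSemidef_niKer_of_re_nonneg {ω : ℝ} (hω : 0 < ω) (hreg : G ∈ (regularAt (jw ω)).matrix) :
    (niKer (evalM G (jw ω))).PosSemidef := by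
  rw [posSemidef_niKer_iff]
  intro y
  have hquad : ContinuousAt (fun s => (s * quadForm (evalM G s) y).re) (jw ω) :=
    Complex.continuous_re.continuousAt.comp (continuousAt_id.mul
      ((continuous_quadForm_left y).continuousAt.comp (continuousAt_evalM hreg)))
  have hpath := (tendsto_add_ofReal_mul (jw ω) one_ne_zero).mono_right nhdsWithin_le_nhds
  have hnonneg : 0 ≤ (jw ω * quadForm (evalM G (jw ω)) y).re := by
    refine ge_of_tendsto (hquad.tendsto.comp hpath) ?_
    filter_upwards [self_mem_nhdsWithin] with x hx
    exact hpr _ (by simpa [jw_re] using hx) y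
  rw [re_jw_mul] at hnonneg
  nlinarith

lemma exists_posSemidef_residue {ω : ℝ} (hω : 0 < ω)
    (hsimple : ∀ i j, poleOrder (G i j) (jw ω) ≤ 1) :
    ∃ R : Matrix (Fin n) (Fin n) ℂ, R.PosSemidef ∧
      Tendsto (fun s : ℂ => (s - jw ω) • Complex.I • evalM G s) (𝓝[≠] jw ω) (𝓝 R) := by
  obtain ⟨L, hL⟩ := exists_tendsto_pow_smul_evalM hsimple
  refine ⟨Complex.I • L, posSemidef_of_quadForm_nonneg fun y => ?_,
    (hL.const_smul Complex.I).congr fun s => by rw [pow_one, smul_comm]⟩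
  have hid : Tendsto (fun s : ℂ => s) (𝓝[≠] jw ω) (𝓝 (jw ω)) := nhdsWithin_le_nhds
  have hresidue : 0 ≤ jw ω * quadForm L y := by
    refine residue_nonneg_of_re_nonneg (hpr · · y) (jw_re ω)
      ((hid.mul (((continuous_quadForm_left y).tendsto L).comp hL)).congr fun s => ?_)
    rw [Function.comp_apply, quadForm_smul, pow_one]
    ring
  have hω' : (0 : ℂ) < ω := Complex.zero_lt_real.mpr hω
  rw [quadForm_smul]
  refine le_of_mul_le_mul_left ?_ hω'
  rwa [mul_zero, ← mul_assoc, mul_comm (ω : ℂ)]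

theorem isNI_of_re_nonneg (hproper : Proper G)
    (hreg : ∀ s : ℂ, 0 < s.re → G ∈ (regularAt s).matrix)
    (hsimple : ∀ ω : ℝ, 0 < ω → ∀ i j, poleOrder (G i j) (jw ω) ≤ 1)
    (hzero : NoDoubleOriginPole G) : IsNI G :=
  ⟨hproper, fun s hs => not_hasPole_iff.mpr (hreg s hs),
    fun _ hω h => posSemidef_niKer_of_re_nonneg hpr hω (not_hasPole_iff.mp h),
    fun ω hω _ => exists_posSemidef_residue hpr hω (hsimple ω hω),
    fun _ => ⟨fun _ hk => tendsto_pow_smul_evalM_zero hzero (by lia), 0, .zero,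
      tendsto_pow_smul_evalM_zero hzero le_rfl⟩⟩

end PositiveRealCriterion

/-- The dynamic stiffness `M s² + D s + K` of the mechanical system with mass matrix `M`,
velocity matrix `D` and stiffness matrix `K`; its inverse is the transfer matrix from forces to
displacements. -/
def dynamicStiffness (M D K : Matrix (Fin n) (Fin n) ℝ) : Matrix (Fin n) (Fin n) (RatFunc ℝ) :=
  of fun i j => algebraMap ℝ[X] (RatFunc ℝ) (C (M i j) * X ^ 2 + C (D i j) * X + C (K i j))

/-- Conditions making the inverse of `dynamicStiffness M D K` negative imaginary. The velocity
matrix may have a skew-symmetric (gyroscopic) part; definiteness of `D + Dᵀ + K` excludes a double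
pole at the origin. -/
structure IsPassiveMechanical (M D K : Matrix (Fin n) (Fin n) ℝ) : Prop where
  mass : M.PosDef
  damping : (D + Dᵀ).PosSemidef
  stiffness : K.PosSemidef
  damping_add_stiffness : (D + Dᵀ + K).PosDef

lemma dynamicStiffness_mem_regularAt_matrix (M D K : Matrix (Fin n) (Fin n) ℝ) (s : ℂ) :
    dynamicStiffness M D K ∈ (regularAt s).matrix :=
  fun _ _ => algebraMap_mem_regularAt _ s

lemma evalM_dynamicStiffness (M D K : Matrix (Fin n) (Fin n) ℝ) (s : ℂ) :
    evalM (dynamicStiffness M D K) s =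
      s ^ 2 • M.map Complex.ofReal + s • D.map Complex.ofReal + K.map Complex.ofReal := by
  ext i j
  rw [evalM, of_apply, dynamicStiffness, of_apply, evalC_algebraMap]
  simp only [map_add, map_mul, map_pow, aeval_C, aeval_X, Complex.coe_algebraMap,
    Matrix.add_apply, Matrix.smul_apply, map_apply, smul_eq_mul]
  ring

lemma quadForm_map_ofReal_add_transpose (D : Matrix (Fin n) (Fin n) ℝ) (y : Fin n → ℂ) :
    (quadForm ((D + Dᵀ).map Complex.ofReal) y).re =
      2 * (quadForm (D.map Complex.ofReal) y).re := by
  have hmap : (D + Dᵀ).map Complex.ofReal = D.map Complex.ofReal + (D.map Complex.ofReal)ᴴ := by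
    ext i j
    simp
  rw [hmap, quadForm_add, quadForm_conjTranspose, RCLike.star_def, Complex.add_re,
    Complex.conj_re, two_mul]

namespace IsPassiveMechanical

variable {M D K : Matrix (Fin n) (Fin n) ℝ} (h : IsPassiveMechanical M D K)
include h

lemma re_star_mul_quadForm (s : ℂ) (y : Fin n → ℂ) :
    (star s * quadForm (evalM (dynamicStiffness M D K) s) y).re =
      s.re * ‖s‖ ^ 2 * (quadForm (M.map Complex.ofReal) y).re +
      ‖s‖ ^ 2 * (quadForm (D.map Complex.ofReal) y).re +
      s.re * (quadForm (K.map Complex.ofReal) y).re := by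
  have hM : (quadForm (M.map Complex.ofReal) y).im = 0 :=
    (posDef_map_ofReal_iff.mpr h.mass).isHermitian.im_star_dotProduct_mulVec_self y
  have hK : (quadForm (K.map Complex.ofReal) y).im = 0 :=
    (posSemidef_map_ofReal h.stiffness).isHermitian.im_star_dotProduct_mulVec_self y
  rw [evalM_dynamicStiffness, quadForm_add, quadForm_add, quadForm_smul, quadForm_smul,
    ← Complex.normSq_eq_norm_sq, Complex.normSq_apply]
  simp only [RCLike.star_def, pow_two, Complex.mul_re, Complex.mul_im, Complex.add_re,
    Complex.add_im, Complex.conj_re, Complex.conj_im, hM, hK]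
  ring

lemma re_quadForm_damping_nonneg (y : Fin n → ℂ) :
    0 ≤ (quadForm (D.map Complex.ofReal) y).re := by
  have hnonneg : 0 ≤ (quadForm ((D + Dᵀ).map Complex.ofReal) y).re :=
    (Complex.nonneg_iff.mp
      ((posSemidef_map_ofReal h.damping).dotProduct_mulVec_nonneg y)).1
  rw [quadForm_map_ofReal_add_transpose] at hnonneg
  linarith

lemma re_quadForm_stiffness_nonneg (y : Fin n → ℂ) :
    0 ≤ (quadForm (K.map Complex.ofReal) y).re :=
  (Complex.nonneg_iff.mp ((posSemidef_map_ofReal h.stiffness).dotProduct_mulVec_nonneg y)).1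

lemma exists_coercive_re_pos : ∃ m : ℝ, 0 < m ∧ ∀ s : ℂ, 0 < s.re → ∀ y,
    s.re * ‖s‖ ^ 2 * m * ‖toLp 2 y‖ ^ 2 ≤
      (star s * quadForm (evalM (dynamicStiffness M D K) s) y).re := by
  have hM := posDef_map_ofReal_iff.mpr h.mass
  obtain ⟨m, hm, hle⟩ := exists_forall_le_quadForm
    ((posDef_iff_quadForm_pos hM.isHermitian).mp hM)
  refine ⟨m, hm, fun s hs y => ?_⟩
  have hmass := mul_le_mul_of_nonneg_left (hle y) (by positivity : 0 ≤ s.re * ‖s‖ ^ 2)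
  have hdamping := mul_nonneg (sq_nonneg ‖s‖) (h.re_quadForm_damping_nonneg y)
  have hstiffness := mul_nonneg hs.le (h.re_quadForm_stiffness_nonneg y)
  rw [h.re_star_mul_quadForm]
  linarith

lemma exists_coercive_near_zero : ∃ c : ℝ, 0 < c ∧ ∀ x : ℝ, 0 < x → x < 1 → ∀ y,
    x ^ 2 * c * ‖toLp 2 y‖ ^ 2 ≤
      (star (x : ℂ) * quadForm (evalM (dynamicStiffness M D K) x) y).re := by
  have hDK := posDef_map_ofReal_iff.mpr h.damping_add_stiffness
  obtain ⟨c, hc, hle⟩ := exists_forall_le_quadForm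
    ((posDef_iff_quadForm_pos hDK.isHermitian).mp hDK)
  refine ⟨c / 2, by positivity, fun x hx hx1 y => ?_⟩
  have hsum := hle y
  rw [Matrix.map_add _ Complex.ofReal_add, quadForm_add, Complex.add_re,
    quadForm_map_ofReal_add_transpose] at hsum
  have hM : 0 ≤ (quadForm (M.map Complex.ofReal) y).re :=
    (Complex.nonneg_iff.mp
      ((posDef_map_ofReal_iff.mpr h.mass).posSemidef.dotProduct_mulVec_nonneg y)).1
  have hmass := mul_nonneg (by positivity : 0 ≤ x * x ^ 2) hM
  have hK := h.re_quadForm_stiffness_nonneg y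
  have hstiffness := mul_le_mul_of_nonneg_right (by nlinarith : x ^ 2 ≤ x) hK
  have hscaled := mul_le_mul_of_nonneg_left hsum (by positivity : 0 ≤ x ^ 2 / 2)
  have hhalf := mul_nonneg (sq_nonneg x) hK
  rw [h.re_star_mul_quadForm, Complex.ofReal_re, Complex.norm_of_nonneg hx.le]
  linarith

lemma isUnit_det {s : ℂ} (hs : 0 < s.re) : IsUnit (dynamicStiffness M D K).det ∧
    (dynamicStiffness M D K)⁻¹ ∈ (regularAt s).matrix ∧
      evalM (dynamicStiffness M D K)⁻¹ s = (evalM (dynamicStiffness M D K) s)⁻¹ := by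
  obtain ⟨m, hm, hle⟩ := h.exists_coercive_re_pos
  have hs0 : 0 < ‖s‖ := hs.trans_le (Complex.re_le_norm s)
  exact isUnit_det_of_evalM_det_ne_zero (dynamicStiffness_mem_regularAt_matrix M D K s)
    (det_ne_zero_of_coercive (by positivity) (hle s hs))

lemma re_mul_quadForm_inv_nonneg (s : ℂ) (hs : 0 < s.re) (u : Fin n → ℂ) :
    0 ≤ (s * quadForm (evalM (dynamicStiffness M D K)⁻¹ s) u).re := by
  obtain ⟨m, hm, hle⟩ := h.exists_coercive_re_pos
  have hs0 : 0 < ‖s‖ := hs.trans_le (Complex.re_le_norm s)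
  rw [(h.isUnit_det hs).2.2]
  exact le_trans (by positivity) (mul_norm_sq_inv_mulVec_le (by positivity) (hle s hs) u)

lemma exists_norm_evalC_inv_le : ∃ m : ℝ, 0 < m ∧ ∀ s : ℂ, 0 < s.re → ∀ i j,
    ‖evalC ((dynamicStiffness M D K)⁻¹ i j) s‖ ≤ 1 / (s.re * ‖s‖ * m) := by
  obtain ⟨m, hm, hle⟩ := h.exists_coercive_re_pos
  refine ⟨m, hm, fun s hs i j => ?_⟩
  have hs0 : 0 < ‖s‖ := hs.trans_le (Complex.re_le_norm s)
  change ‖evalM (dynamicStiffness M D K)⁻¹ s i j‖ ≤ _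
  rw [(h.isUnit_det hs).2.2]
  refine (norm_inv_apply_le (by positivity) (hle s hs) i j).trans_eq ?_
  field_simp

lemma strictlyProper_inv : StrictlyProper (dynamicStiffness M D K)⁻¹ := by
  obtain ⟨m, hm, hle⟩ := h.exists_norm_evalC_inv_le
  intro i j
  have hlim : Tendsto (fun x : ℝ => 1 / (x * x * m)) atTop (𝓝 0) :=
    tendsto_const_nhds.div_atTop
      ((tendsto_id.atTop_mul_atTop₀ tendsto_id).atTop_mul_const hm)
  refine num_degree_lt_of_tendsto_zero (squeeze_zero_norm' ?_ hlim)
  filter_upwards [eventually_gt_atTop 0] with x hx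
  simpa [abs_of_pos hx] using hle x (by simpa using hx) i j

lemma poleOrder_inv_jw_le_one {ω : ℝ} (hω : 0 < ω) (i j : Fin n) :
    poleOrder ((dynamicStiffness M D K)⁻¹ i j) (jw ω) ≤ 1 := by
  obtain ⟨m, hm, hle⟩ := h.exists_norm_evalC_inv_le
  refine poleOrder_le_of_frequently_norm_le (K := 1 / (ω * m))
    ((tendsto_add_ofReal_mul (jw ω) one_ne_zero).frequently (Eventually.frequently ?_))
  filter_upwards [self_mem_nhdsWithin] with x (hx : 0 < x)
  set s : ℂ := jw ω + x * 1 with hs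
  have hre : s.re = x := by simp [hs, jw_re]
  have him : ω ≤ ‖s‖ := (le_abs_self ω).trans (by simpa [hs, jw] using Complex.abs_im_le_norm s)
  have hbound := hle s (hre.symm ▸ hx) i j
  calc ‖(s - jw ω) ^ 1 * evalC ((dynamicStiffness M D K)⁻¹ i j) s‖
      = x * ‖evalC ((dynamicStiffness M D K)⁻¹ i j) s‖ := by simp [hs, abs_of_pos hx]
    _ ≤ x * (1 / (x * ‖s‖ * m)) := by gcongr; rwa [hre] at hbound
    _ = 1 / (‖s‖ * m) := by field_simp
    _ ≤ 1 / (ω * m) := by gcongr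

lemma noDoubleOriginPole_inv : NoDoubleOriginPole (dynamicStiffness M D K)⁻¹ := by
  obtain ⟨c, hc, hle⟩ := h.exists_coercive_near_zero
  intro i j
  rw [rootMultiplicity_zero_denom]
  refine poleOrder_le_of_frequently_norm_le (K := 1 / c)
    ((tendsto_add_ofReal_mul 0 one_ne_zero).frequently (Eventually.frequently ?_))
  filter_upwards [Ioo_mem_nhdsGT (zero_lt_one' ℝ)] with x ⟨hx, hx1⟩
  have hre : 0 < (x : ℂ).re := by simpa using hx
  have hbound := norm_inv_apply_le (by positivity) (hle x hx hx1) i j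
  rw [← (h.isUnit_det hre).2.2, Complex.norm_of_nonneg hx.le] at hbound
  calc ‖(0 + x * 1 - 0) ^ 1 * evalC ((dynamicStiffness M D K)⁻¹ i j) (0 + x * 1)‖
      = x * ‖evalM (dynamicStiffness M D K)⁻¹ x i j‖ := by simp [evalM, abs_of_pos hx]
    _ ≤ x * (x / (x ^ 2 * c)) := by gcongr
    _ = 1 / c := by field_simp

theorem isNI_inv : IsNI (dynamicStiffness M D K)⁻¹ :=
  isNI_of_re_nonneg h.re_mul_quadForm_inv_nonneg (fun i j => (h.strictlyProper_inv i j).le)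
    (fun _ hs => (h.isUnit_det hs).2.1) (fun _ hω => h.poleOrder_inv_jw_le_one hω)
    h.noDoubleOriginPole_inv

end IsPassiveMechanical

end MechanicalSystems

section Necessity

open WithLp (toLp)

variable {C : Matrix (Fin n) (Fin n) (RatFunc ℝ)}

lemma strictlyProper_zero : StrictlyProper (0 : Matrix (Fin n) (Fin n) (RatFunc ℝ)) := by
  intro i j
  simp

lemma poleOrder_zero (a : ℂ) : poleOrder 0 a = 0 :=
  poleOrder_eq_zero_iff.mpr (zero_mem _)

lemma noDoubleOriginPole_zero : NoDoubleOriginPole (0 : Matrix (Fin n) (Fin n) (RatFunc ℝ)) :=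
  fun _ _ => (rootMultiplicity_zero_denom 0).trans_le ((poleOrder_zero 0).trans_le zero_le_one)

lemma isNI_zero : IsNI (0 : Matrix (Fin n) (Fin n) (RatFunc ℝ)) := by
  refine isNI_of_re_nonneg (fun s _ y => ?_) (fun i j => (strictlyProper_zero i j).le)
    (fun _ _ => zero_mem _) (fun ω _ _ _ => (poleOrder_zero (jw ω)).trans_le zero_le_one)
    noDoubleOriginPole_zero
  have heval : evalM (0 : Matrix (Fin n) (Fin n) (RatFunc ℝ)) s = 0 := by
    ext i j
    simp [evalM, evalC]
  simp [heval, quadForm]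

lemma memRHinf_of_feedbackStable_zero (h : FeedbackStable 0 C) : MemRHinf C := by
  have hproper (i j : Fin n) := h.2.1 (.inr i) (.inl j)
  have hpole (s : ℂ) (hs : 0 ≤ s.re) (i j : Fin n) := h.2.2 s hs (.inr i) (.inl j)
  simp only [fromBlocks_apply₂₁, zero_mul, sub_zero, inv_one, mul_one] at hproper hpole
  exact ⟨hproper, hpole⟩

-- The closed loop `(1 - Φ⁻¹ C)⁻¹ Φ⁻¹` is a left inverse of `Φ - C`.
lemma eq_zero_of_feedbackStable_inv {Φ : Matrix (Fin n) (Fin n) (RatFunc ℝ)} {s : ℂ}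
    (hstable : FeedbackStable Φ⁻¹ C) (hΦ : IsUnit Φ.det) (hs : 0 ≤ s.re)
    (hΦs : Φ ∈ (regularAt s).matrix) (hCs : C ∈ (regularAt s).matrix) {y : Fin n → ℂ}
    (hy : evalM Φ s *ᵥ y = evalM C s *ᵥ y) : y = 0 := by
  have hQ : closedLoop Φ⁻¹ C ∈ (regularAt s).matrix := fun i j =>
    hstable.2.2 s hs (.inl i) (.inr j)
  have hleft : closedLoop Φ⁻¹ C * (Φ - C) = 1 := by
    rw [closedLoop, mul_assoc, mul_sub, nonsing_inv_mul _ hΦ,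
      nonsing_inv_mul _ hstable.1.isUnit]
  have hleft_s : evalM (closedLoop Φ⁻¹ C) s * (evalM Φ s - evalM C s) = 1 := by
    rw [← evalM_sub hΦs hCs, ← evalM_mul hQ (sub_mem hΦs hCs), hleft, evalM_one]
  rw [← one_mulVec y, ← hleft_s, ← mulVec_mulVec, sub_mulVec, hy, sub_self, mulVec_zero]

lemma exists_isHermitian_mulVec_eq {ι : Type*} [Fintype ι] {y v : ι → ℂ} (hy : y ≠ 0)
    (hv : (star y ⬝ᵥ v).im = 0) : ∃ H : Matrix ι ι ℂ, H.IsHermitian ∧ H *ᵥ y = v := by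
  set N : ℝ := ‖toLp 2 y‖ ^ 2
  set a : ℝ := (star y ⬝ᵥ v).re with ha
  have hN : (N : ℂ) ≠ 0 := by simpa [N] using hy
  have hyv : star v ⬝ᵥ y = a := by
    rw [← star_star_dotProduct]
    apply Complex.ext <;> simp [ha, hv]
  have hyy : star y ⬝ᵥ y = N := star_dotProduct_self y
  refine ⟨((N⁻¹ : ℝ) : ℂ) • (vecMulVec v (star y) + vecMulVec y (star v)) -
    ((a / N ^ 2 : ℝ) : ℂ) • vecMulVec y (star y), ?_, ?_⟩
  · simp [IsHermitian, conjTranspose_vecMulVec, add_comm]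
  · simp only [sub_mulVec, smul_mulVec, add_mulVec, vecMulVec_mulVec, hyy, hyv]
    ext i
    simp only [Pi.sub_apply, Pi.smul_apply, Pi.add_apply, smul_eq_mul, MulOpposite.smul_eq_mul_unop,
      MulOpposite.unop_op, Complex.ofReal_inv, Complex.ofReal_div, Complex.ofReal_pow]
    field_simp
    ring

lemma map_ofReal_smul_one {ι : Type*} [DecidableEq ι] (a : ℝ) :
    (a • (1 : Matrix ι ι ℝ)).map Complex.ofReal = (a : ℂ) • 1 := by
  ext i j
  by_cases h : i = j <;> simp [h]

-- Splitting `H = Re H + i Im H`, the symmetric part enters the stiffness and the skew-symmetric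
-- part the velocity matrix; the mass term cancels the shift `μ` at the frequency `ω`.
lemma exists_isPassiveMechanical_evalM_jw_eq {H : Matrix (Fin n) (Fin n) ℂ} (hH : H.IsHermitian)
    {ω d : ℝ} (hω : 0 < ω) (hd : 0 ≤ d) :
    ∃ M D K, IsPassiveMechanical M D K ∧
      evalM (dynamicStiffness M D K) (jw ω) = H + (jw ω * d) • 1 := by
  set R : Matrix (Fin n) (Fin n) ℝ := H.map Complex.re with hR
  set S : Matrix (Fin n) (Fin n) ℝ := ω⁻¹ • H.map Complex.im with hS
  have hR_symm : (R.map Complex.ofReal).IsHermitian := by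
    ext i j
    simp [hR, ← hH.apply i j]
  have hS_skew : Sᵀ = -S := by
    ext i j
    simp [hS, ← hH.apply i j]
  obtain ⟨μ, hμ, hpos⟩ := exists_posDef_smul_one_add hR_symm
  rw [← map_ofReal_smul_one, ← Matrix.map_add _ Complex.ofReal_add, posDef_map_ofReal_iff] at hpos
  refine ⟨(μ / ω ^ 2) • 1, d • 1 + S, μ • 1 + R, ?_, ?_⟩
  · have hdamping : (d • 1 + S + (d • 1 + S)ᵀ).PosSemidef := by
      have hdiag : (d • (1 : Matrix (Fin n) (Fin n) ℝ)).PosSemidef := .smul .one hd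
      rw [transpose_add, hS_skew, transpose_smul, transpose_one, add_add_add_comm, add_neg_cancel,
        add_zero]
      exact hdiag.add hdiag
    exact ⟨.smul .one (by positivity), hdamping, hpos.posSemidef, hpos.posSemidef_add hdamping⟩
  · have hω' : (ω : ℂ) ≠ 0 := Complex.ofReal_ne_zero.mpr hω.ne'
    have hmass : jw ω ^ 2 * (μ / ω ^ 2 : ℝ) = -μ := by
      rw [jw, mul_pow, Complex.I_sq, Complex.ofReal_div, Complex.ofReal_pow]
      field_simp
    have hparts : jw ω • S.map Complex.ofReal + R.map Complex.ofReal = H := by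
      ext i j
      apply Complex.ext <;> simp [jw, hR, hS, hω.ne']
    rw [evalM_dynamicStiffness, Matrix.map_add _ Complex.ofReal_add,
      Matrix.map_add _ Complex.ofReal_add, map_ofReal_smul_one, map_ofReal_smul_one,
      map_ofReal_smul_one, smul_smul, hmass, ← hparts]
    module

lemma exists_isPassiveMechanical_mulVec_eq {A : Matrix (Fin n) (Fin n) ℂ} {ω : ℝ} (hω : 0 < ω)
    {y : Fin n → ℂ} (hy : y ≠ 0) (him : 0 ≤ (quadForm A y).im) :
    ∃ M D K, IsPassiveMechanical M D K ∧
      evalM (dynamicStiffness M D K) (jw ω) *ᵥ y = A *ᵥ y := by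
  have hN : 0 < ‖toLp 2 y‖ := norm_pos_iff.mpr (by simpa using hy)
  set d : ℝ := (quadForm A y).im / (ω * ‖toLp 2 y‖ ^ 2) with hd
  have hreal : (star y ⬝ᵥ (A *ᵥ y - (jw ω * d) • y)).im = 0 := by
    rw [dotProduct_sub, dotProduct_smul, star_dotProduct_self, ← quadForm]
    simp only [jw, hd, smul_eq_mul, Complex.sub_im, Complex.mul_im, Complex.mul_re,
      Complex.I_re, Complex.I_im, Complex.ofReal_re, Complex.ofReal_im]
    field_simp
    ring
  obtain ⟨H, hH, hHy⟩ := exists_isHermitian_mulVec_eq hy hreal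
  obtain ⟨M, D, K, hpassive, heval⟩ :=
    exists_isPassiveMechanical_evalM_jw_eq hH hω (d := d) (by positivity)
  refine ⟨M, D, K, hpassive, ?_⟩
  rw [heval, add_mulVec, hHy, smul_mulVec, one_mulVec, sub_add_cancel]

section Destabilization

variable (hC : MemRHinf C) (hstable : ∀ P : Matrix (Fin n) (Fin n) (RatFunc ℝ),
  IsNI P → StrictlyProper P → NoDoubleOriginPole P → FeedbackStable P C)
include hC hstable

lemma eq_zero_of_dynamicStiffness_mulVec_eq {M D K : Matrix (Fin n) (Fin n) ℝ}
    (h : IsPassiveMechanical M D K) {s : ℂ} (hs : 0 ≤ s.re) {y : Fin n → ℂ}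
    (hy : evalM (dynamicStiffness M D K) s *ᵥ y = evalM C s *ᵥ y) : y = 0 :=
  eq_zero_of_feedbackStable_inv
    (hstable _ h.isNI_inv h.strictlyProper_inv h.noDoubleOriginPole_inv)
    (h.isUnit_det (s := 1) (by simp)).1 hs (dynamicStiffness_mem_regularAt_matrix M D K s)
    (hC.mem_regularAt_matrix hs) hy

theorem isSNI_of_forall_feedbackStable : IsSNI C := by
  refine ⟨hC, fun ω hω => (posDef_niKer_iff _).mpr fun y hy => ?_⟩
  by_contra! him
  obtain ⟨M, D, K, hpassive, heq⟩ := exists_isPassiveMechanical_mulVec_eq hω hy him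
  exact hy (eq_zero_of_dynamicStiffness_mulVec_eq hC hstable hpassive (jw_re ω).ge heq)

lemma eigenvalue_evalM_zero_neg {l : ℝ} {y : Fin n → ℂ} (hy : y ≠ 0)
    (heig : evalM C 0 *ᵥ y = (l : ℂ) • y) : l < 0 := by
  by_contra! hl
  have hpassive : IsPassiveMechanical (n := n) 1 1 (l • 1) := by
    have hK : (l • (1 : Matrix (Fin n) (Fin n) ℝ)).PosSemidef := .smul .one hl
    have hD : (1 + 1ᵀ : Matrix (Fin n) (Fin n) ℝ).PosDef := by
      rw [transpose_one]
      exact PosDef.one.add .one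
    exact ⟨.one, hD.posSemidef, hK, hD.add_posSemidef hK⟩
  refine hy (eq_zero_of_dynamicStiffness_mulVec_eq hC hstable hpassive (s := 0) le_rfl ?_)
  rw [heig, evalM_dynamicStiffness, map_ofReal_smul_one, zero_pow two_ne_zero, zero_smul,
    zero_add, zero_add, smul_mulVec, one_mulVec]

theorem posDef_neg_evalM_zero_of_forall_feedbackStable : (-evalM C 0).PosDef := by
  have hherm : (-evalM C 0).IsHermitian :=
    ((isSNI_of_forall_feedbackStable hC hstable).isNI.isHermitian_evalM_zero hC).neg
  rw [hherm.posDef_iff_eigenvalues_pos]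
  intro i
  have heig := hherm.mulVec_eigenvectorBasis i
  rw [neg_mulVec, neg_eq_iff_eq_neg] at heig
  have hneg : -hherm.eigenvalues i < 0 := by
    refine eigenvalue_evalM_zero_neg hC hstable
      (y := (hherm.eigenvectorBasis i).ofLp) ?_ (by rw [heig]; module)
    simpa using hherm.eigenvectorBasis.orthonormal.ne_zero i
  exact neg_neg_iff_pos.mp hneg

end Destabilization

end Necessity

theorem converse_strictly_proper_NI_general {n : ℕ} (C : Matrix (Fin n) (Fin n) (RatFunc ℝ)) :
    List.TFAE [
      ∀ P : Matrix (Fin n) (Fin n) (RatFunc ℝ), IsNI P → StrictlyProper P → FeedbackStable P C,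
      ∀ P : Matrix (Fin n) (Fin n) (RatFunc ℝ), IsNI P → StrictlyProper P →
        NoDoubleOriginPole P → FeedbackStable P C,
      IsSNI C ∧ (-(evalR C 0)).PosDef] := by
  have hzero : (-(evalR C 0)).PosDef ↔ (-evalM C 0).PosDef := by
    rw [evalM_zero_eq_map_ofReal, ← posDef_map_ofReal_iff, Matrix.map_neg _ Complex.ofReal_neg]
  rw [hzero]
  tfae_have 1 → 2 := fun h P hP hsp _ => h P hP hsp
  tfae_have 2 → 3 := fun h => by
    have hC := memRHinf_of_feedbackStable_zero
      (h 0 isNI_zero strictlyProper_zero noDoubleOriginPole_zero)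
    exact ⟨isSNI_of_forall_feedbackStable hC h,
      posDef_neg_evalM_zero_of_forall_feedbackStable hC h⟩
  tfae_have 3 → 1 := fun ⟨hC, h0⟩ P hP hsp => feedbackStable_of_isNI_of_isSNI hP hsp hC h0
  tfae_finish

/-- converse NI theorem for strictly proper NI uncertainty. -/
theorem converse_strictly_proper_NI {n : ℕ} (C : Matrix (Fin n) (Fin n) (RatFunc ℝ)) (hC : MemRHinf C) :
    ((∀ P : Matrix (Fin n) (Fin n) (RatFunc ℝ), IsNI P → StrictlyProper P → FeedbackStable P C) ↔
     (∀ P : Matrix (Fin n) (Fin n) (RatFunc ℝ), IsNI P → StrictlyProper P → NoDoubleOriginPole P →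
        FeedbackStable P C)) ∧
    ((∀ P : Matrix (Fin n) (Fin n) (RatFunc ℝ), IsNI P → StrictlyProper P → FeedbackStable P C) ↔
     (IsSNI C ∧ (-(evalR C 0)).PosDef)) :=
  ⟨(converse_strictly_proper_NI_general C).out 0 1, (converse_strictly_proper_NI_general C).out 0 2⟩

end NIControl
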